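/- arXiv:2103.10028 — 2 statements merged into one kernel-verified Lean document; each statement's English description precedes it below -/
import Mathlib

section
/- For t = T−1,…,0 define recursively J_t(π²) := min over u_t² ∈ 𝒰_t^2 and prescriptions γ_t^{[2,1]} : Δ(𝒳_t) → 𝒰_t^1 of [ c̃_t^2(π², γ_t^{[2,1]}, u_t²) + E^{(g,ψ^2)}[J_{t+1}(Π_{t+1}^2) | Π_t^2 = π², Γ_t^{[2,1]} = γ_t^{[2,1]}, U_t^2 = u_t²] ], with boundary condition J_T = J_T^2. Then for every t = 0,…,T−1: (1) for every admissible team strategy g of the structural form U_ℓ^1 = g_ℓ^1(Π_ℓ^1, Π_ℓ^2), U_ℓ^2 = g_ℓ^2(Π_ℓ^2), the cost-to-go satisfies 𝒥_t(g) ≥ E^{(g,ψ^2)}[J_t(Π_t^2)]; and (2) the argmin prescription and control laws (ψ_t^{*[2,1]}, g_t^{*2}), together with g_t^{*1}(Π_t^1, Π_t^2) := ψ_t^{*[2,1]}(Π_t^2)(Π_t^1) and the optimal laws g_{t+1:T}^* from later stages, achieve equality: 𝒥_t(g_{0:t−1}, g_t^{*1}, g_t^{*2}, g_{t+1:T}^*)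 = E^{(g,ψ^2)}[J_t(Π_t^2)]. -/
/-!
Common framework: a two-agent sequential dynamic team with nested information
structure (Dave & Malikopoulos, "Structural results for decentralized
stochastic control with a nested information structure").

* `X t` : state space at time `t`; `U1 t`, `U2 t` : action spaces of agents 1 and 2;
* `W t` : disturbance; `V1 t`, `V2 t` : measurement noises; `Y1 t`, `Y2 t` : observations.
* Dynamics `X_{t+1} = f t X_t U¹_t U²_t W_t`, observations `Y^k_t = h^k t X_t V^k_t`.
* Memories `M²_t = (Y²_{0:t}, U²_{0:t-1})`, `L_t^{[1,2]} = (Y¹_{0:t}, U¹_{0:t-1})`,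
  `M¹_t = (L_t^{[1,2]}, M²_t)` (nested information).
* The primitive random variables are independent with given PMFs; the sample
  space for horizon `T` is `ΩT`, with the product mass function `mass`.
-/

open scoped Classical
open Finset

namespace NestedTeam

noncomputable section

/-- Memory of agent 2 at time `t`: observations `Y²₀,…,Y²ₜ` and actions `U²₀,…,U²ₜ₋₁`. -/
abbrev M2 (Y2 U2 : ℕ → Type) (t : ℕ) : Type :=
  ((s : Fin (t + 1)) → Y2 s) × ((s : Fin t) → U2 s)

/-- The private information `L_t^{[1,2]} = M¹_t \ M²_t` of agent 1. -/
abbrev Lp (Y1 U1 : ℕ → Type) (t : ℕ) : Type :=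
  ((s : Fin (t + 1)) → Y1 s) × ((s : Fin t) → U1 s)

/-- Memory of agent 1 at time `t` (nested information: it contains `M²_t`). -/
abbrev M1 (Y1 Y2 U1 U2 : ℕ → Type) (t : ℕ) : Type :=
  Lp Y1 U1 t × M2 Y2 U2 t

/-- The system: dynamics, observation maps and per-stage cost. -/
structure Sys (X U1 U2 W V1 V2 Y1 Y2 : ℕ → Type) where
  f : ∀ t, X t → U1 t → U2 t → W t → X (t + 1)
  h1 : ∀ t, X t → V1 t → Y1 t
  h2 : ∀ t, X t → V2 t → Y2 t
  c : ∀ t, X t → U1 t → U2 t → ℝ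

/-- A control strategy profile: `U¹_t = g1 t M¹_t`, `U²_t = g2 t M²_t`. -/
structure Strat (U1 U2 Y1 Y2 : ℕ → Type) where
  g1 : ∀ t, M1 Y1 Y2 U1 U2 t → U1 t
  g2 : ∀ t, M2 Y2 U2 t → U2 t

/-- A realization of the primitive random variables. -/
structure Prim (X W V1 V2 : ℕ → Type) where
  x0 : X 0
  w : ∀ t, W t
  v1 : ∀ t, V1 t
  v2 : ∀ t, V2 t

variable {X U1 U2 W V1 V2 Y1 Y2 : ℕ → Type}

/-- The closed-loop trajectory: states `X_{0:t}` and actions `U^{1:2}_{0:t-1}`. -/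
def hist (S : Sys X U1 U2 W V1 V2 Y1 Y2) (g : Strat U1 U2 Y1 Y2) (ρ : Prim X W V1 V2) :
    (t : ℕ) → ((s : Fin (t + 1)) → X s) × ((s : Fin t) → U1 s × U2 s)
  | 0 => (Fin.cons (α := fun s : Fin 1 => X s) ρ.x0 (fun i => i.elim0), fun i => i.elim0)
  | t + 1 =>
    let p := hist S g ρ t
    let y1 : (s : Fin (t + 1)) → Y1 s := fun s => S.h1 s (p.1 s) (ρ.v1 s)
    let y2 : (s : Fin (t + 1)) → Y2 s := fun s => S.h2 s (p.1 s) (ρ.v2 s)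
    let m1 : M1 Y1 Y2 U1 U2 t := ((y1, fun s => (p.2 s).1), (y2, fun s => (p.2 s).2))
    let a1 := g.g1 t m1
    let a2 := g.g2 t m1.2
    (Fin.snoc (α := fun s : Fin (t + 2) => X s) p.1 (S.f t (p.1 (Fin.last t)) a1 a2 (ρ.w t)),
     Fin.snoc (α := fun s : Fin (t + 1) => U1 s × U2 s) p.2 (a1, a2))

/-- State `X_t` along the closed loop. -/
def xTraj (S : Sys X U1 U2 W V1 V2 Y1 Y2) (g : Strat U1 U2 Y1 Y2) (ρ : Prim X W V1 V2)
    (t : ℕ) : X t := (hist S g ρ t).1 (Fin.last t)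

/-- `L_t^{[1,2]} = (Y¹_{0:t}, U¹_{0:t-1})` along the closed loop. -/
def lpTraj (S : Sys X U1 U2 W V1 V2 Y1 Y2) (g : Strat U1 U2 Y1 Y2) (ρ : Prim X W V1 V2)
    (t : ℕ) : Lp Y1 U1 t :=
  (fun s => S.h1 s ((hist S g ρ t).1 s) (ρ.v1 s), fun s => ((hist S g ρ t).2 s).1)

/-- `M²_t = (Y²_{0:t}, U²_{0:t-1})` along the closed loop. -/
def m2Traj (S : Sys X U1 U2 W V1 V2 Y1 Y2) (g : Strat U1 U2 Y1 Y2) (ρ : Prim X W V1 V2)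
    (t : ℕ) : M2 Y2 U2 t :=
  (fun s => S.h2 s ((hist S g ρ t).1 s) (ρ.v2 s), fun s => ((hist S g ρ t).2 s).2)

/-- `M¹_t` along the closed loop. -/
def m1Traj (S : Sys X U1 U2 W V1 V2 Y1 Y2) (g : Strat U1 U2 Y1 Y2) (ρ : Prim X W V1 V2)
    (t : ℕ) : M1 Y1 Y2 U1 U2 t := (lpTraj S g ρ t, m2Traj S g ρ t)

/-- Action `U¹_t` along the closed loop. -/
def u1Traj (S : Sys X U1 U2 W V1 V2 Y1 Y2) (g : Strat U1 U2 Y1 Y2) (ρ : Prim X W V1 V2)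
    (t : ℕ) : U1 t := g.g1 t (m1Traj S g ρ t)

/-- Action `U²_t` along the closed loop. -/
def u2Traj (S : Sys X U1 U2 W V1 V2 Y1 Y2) (g : Strat U1 U2 Y1 Y2) (ρ : Prim X W V1 V2)
    (t : ℕ) : U2 t := g.g2 t (m2Traj S g ρ t)

/-- Observation `Y¹_t` along the closed loop. -/
def y1Traj (S : Sys X U1 U2 W V1 V2 Y1 Y2) (g : Strat U1 U2 Y1 Y2) (ρ : Prim X W V1 V2)
    (t : ℕ) : Y1 t := S.h1 t (xTraj S g ρ t) (ρ.v1 t)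

/-- Observation `Y²_t` along the closed loop. -/
def y2Traj (S : Sys X U1 U2 W V1 V2 Y1 Y2) (g : Strat U1 U2 Y1 Y2) (ρ : Prim X W V1 V2)
    (t : ℕ) : Y2 t := S.h2 t (xTraj S g ρ t) (ρ.v2 t)

/-- New information `Z¹_{t+1} = (Y¹_{t+1}, U¹_t, Y²_{t+1}, U²_t)` of agent 1. -/
def z1Traj (S : Sys X U1 U2 W V1 V2 Y1 Y2) (g : Strat U1 U2 Y1 Y2) (ρ : Prim X W V1 V2)
    (t : ℕ) : Y1 (t + 1) × U1 t × Y2 (t + 1) × U2 t :=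
  (y1Traj S g ρ (t + 1), u1Traj S g ρ t, y2Traj S g ρ (t + 1), u2Traj S g ρ t)

/-- New information `Z²_{t+1} = (Y²_{t+1}, U²_t)` of agent 2. -/
def z2Traj (S : Sys X U1 U2 W V1 V2 Y1 Y2) (g : Strat U1 U2 Y1 Y2) (ρ : Prim X W V1 V2)
    (t : ℕ) : Y2 (t + 1) × U2 t := (y2Traj S g ρ (t + 1), u2Traj S g ρ t)

/-- Sample space of primitive random variables for horizon `T`. -/
abbrev ΩT (X W V1 V2 : ℕ → Type) (T : ℕ) : Type :=
  X 0 × ((t : Fin (T + 1)) → W t) × ((t : Fin (T + 1)) → V1 t) × ((t : Fin (T + 1)) → V2 t)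

/-- Extend a finite-horizon family to all times (by junk beyond the horizon). -/
def ext {α : ℕ → Type} [∀ t, Inhabited (α t)] (T : ℕ) (a : (t : Fin (T + 1)) → α t)
    (t : ℕ) : α t := if h : t < T + 1 then a ⟨t, h⟩ else default

/-- The primitive realization corresponding to a sample point. -/
def toPrim [∀ t, Inhabited (W t)] [∀ t, Inhabited (V1 t)] [∀ t, Inhabited (V2 t)]
    (T : ℕ) (ω : ΩT X W V1 V2 T) : Prim X W V1 V2 :=
  ⟨ω.1, ext T ω.2.1, ext T ω.2.2.1, ext T ω.2.2.2⟩

/-- The (known) probability mass functions of the mutually independent primitive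
random variables. -/
structure PrimPMF (X W V1 V2 : ℕ → Type) [Fintype (X 0)] [∀ t, Fintype (W t)]
    [∀ t, Fintype (V1 t)] [∀ t, Fintype (V2 t)] where
  pX0 : X 0 → ℝ
  pW : ∀ t, W t → ℝ
  pV1 : ∀ t, V1 t → ℝ
  pV2 : ∀ t, V2 t → ℝ
  pX0_nonneg : ∀ x, 0 ≤ pX0 x
  pX0_sum : ∑ x, pX0 x = 1
  pW_nonneg : ∀ t w, 0 ≤ pW t w
  pW_sum : ∀ t, ∑ w, pW t w = 1
  pV1_nonneg : ∀ t v, 0 ≤ pV1 t v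
  pV1_sum : ∀ t, ∑ v, pV1 t v = 1
  pV2_nonneg : ∀ t v, 0 ≤ pV2 t v
  pV2_sum : ∀ t, ∑ v, pV2 t v = 1

variable [Fintype (X 0)] [∀ t, Fintype (W t)] [∀ t, Fintype (V1 t)] [∀ t, Fintype (V2 t)]
variable [∀ t, Inhabited (W t)] [∀ t, Inhabited (V1 t)] [∀ t, Inhabited (V2 t)]

/-- Product mass of a sample point (independent primitives). -/
def mass (P : PrimPMF X W V1 V2) (T : ℕ) (ω : ΩT X W V1 V2 T) : ℝ :=
  P.pX0 ω.1 * (∏ t : Fin (T + 1), P.pW t (ω.2.1 t)) *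
    (∏ t : Fin (T + 1), P.pV1 t (ω.2.2.1 t)) * (∏ t : Fin (T + 1), P.pV2 t (ω.2.2.2 t))

/-- Elementary conditional probability `P(A | B)` on a finite sample space. -/
def condProb {Ω : Type*} [Fintype Ω] (P : Ω → ℝ) (A B : Ω → Prop) : ℝ :=
  (∑ ω, if A ω ∧ B ω then P ω else 0) / (∑ ω, if B ω then P ω else 0)

/-- Elementary conditional expectation `E[F | B]` on a finite sample space. -/
def condExp {Ω : Type*} [Fintype Ω] (P : Ω → ℝ) (F : Ω → ℝ) (B : Ω → Prop) : ℝ :=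
  (∑ ω, if B ω then P ω * F ω else 0) / (∑ ω, if B ω then P ω else 0)

/-- Agent 1's information state `Π¹_t = P(X_t = · | M¹_t)` at the realization `ω`. -/
def infoState1 (S : Sys X U1 U2 W V1 V2 Y1 Y2) (g : Strat U1 U2 Y1 Y2)
    (P : PrimPMF X W V1 V2) (T : ℕ) (ω : ΩT X W V1 V2 T) (t : ℕ) : X t → ℝ :=
  fun x => condProb (mass P T)
    (fun ω' => xTraj S g (toPrim T ω') t = x)
    (fun ω' => m1Traj S g (toPrim T ω') t = m1Traj S g (toPrim T ω) t)

/-- Agent 2's information state `Π²_t = P((X_t, L_t^{[1,2]}) = · | M²_t)` at `ω`. -/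
def infoState2 (S : Sys X U1 U2 W V1 V2 Y1 Y2) (g : Strat U1 U2 Y1 Y2)
    (P : PrimPMF X W V1 V2) (T : ℕ) (ω : ΩT X W V1 V2 T) (t : ℕ) :
    X t × Lp Y1 U1 t → ℝ :=
  fun sl => condProb (mass P T)
    (fun ω' => (xTraj S g (toPrim T ω') t, lpTraj S g (toPrim T ω') t) = sl)
    (fun ω' => m2Traj S g (toPrim T ω') t = m2Traj S g (toPrim T ω) t)

/-- Per-stage cost along the closed loop. -/
def stageCost (S : Sys X U1 U2 W V1 V2 Y1 Y2) (g : Strat U1 U2 Y1 Y2) (ρ : Prim X W V1 V2)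
    (t : ℕ) : ℝ := S.c t (xTraj S g ρ t) (u1Traj S g ρ t) (u2Traj S g ρ t)

/-- Expected cost-to-go `𝒥_{t₀}(g) = E[Σ_{t=t₀}^T c_t(X_t,U¹_t,U²_t)]`. -/
def costToGo (S : Sys X U1 U2 W V1 V2 Y1 Y2) (g : Strat U1 U2 Y1 Y2)
    (P : PrimPMF X W V1 V2) (T t0 : ℕ) : ℝ :=
  ∑ ω : ΩT X W V1 V2 T, mass P T ω * ∑ t ∈ Finset.Icc t0 T, stageCost S g (toPrim T ω) t

/-- Expected total cost `𝒥(g) = E[Σ_{t=0}^T c_t(X_t,U¹_t,U²_t)]`. -/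
def totalCost (S : Sys X U1 U2 W V1 V2 Y1 Y2) (g : Strat U1 U2 Y1 Y2)
    (P : PrimPMF X W V1 V2) (T : ℕ) : ℝ := costToGo S g P T 0

/-- `(g, ψ²)` is a compatible control/prescription pair: agent 1's action is
generated by the prescription `Γ_t^{[2,1]} = ψ_t(M²_t)` applied to `Π¹_t`. -/
def Compat (S : Sys X U1 U2 W V1 V2 Y1 Y2) (g : Strat U1 U2 Y1 Y2)
    (ψ : ∀ t, M2 Y2 U2 t → (X t → ℝ) → U1 t) (P : PrimPMF X W V1 V2) (T : ℕ) : Prop :=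
  ∀ t, t ≤ T → ∀ ω : ΩT X W V1 V2 T, 0 < mass P T ω →
    u1Traj S g (toPrim T ω) t =
      ψ t (m2Traj S g (toPrim T ω) t) (infoState1 S g P T ω t)

/-- The map `e_t` of Lemma 4: conditioning a joint distribution on
`𝒳_t × 𝓛_t^{[1,2]}` on its second component. -/
def eMap [∀ t, Fintype (X t)] (t : ℕ) (π2 : X t × Lp Y1 U1 t → ℝ) (l : Lp Y1 U1 t) :
    X t → ℝ := fun x => π2 (x, l) / ∑ x', π2 (x', l)

variable [∀ t, Fintype (X t)] [∀ t, Fintype (U1 t)] [∀ t, Fintype (U2 t)]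
variable [∀ t, Fintype (Y1 t)] [∀ t, Fintype (Y2 t)]

/-- One step of the system seen from agent 2: from `(X_t, L_t^{[1,2]})`, the
information state `π²`, a prescription `γ`, the action `u²`, and the primitive
variables, compute `((X_{t+1}, L_{t+1}^{[1,2]}), Z²_{t+1})`; agent 1's action is
`u¹ = γ(e_t(π², L_t^{[1,2]}))` (Lemma 4). -/
def stepS (S : Sys X U1 U2 W V1 V2 Y1 Y2) (t : ℕ) (π2 : X t × Lp Y1 U1 t → ℝ)
    (γ : (X t → ℝ) → U1 t) (u2 : U2 t) (sl : X t × Lp Y1 U1 t) (w : W t)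
    (v1 : V1 (t + 1)) (v2 : V2 (t + 1)) :
    (X (t + 1) × Lp Y1 U1 (t + 1)) × (Y2 (t + 1) × U2 t) :=
  let u1 := γ (eMap t π2 sl.2)
  let x' := S.f t sl.1 u1 u2 w
  ((x', (Fin.snoc (α := fun s : Fin (t + 2) => Y1 s) sl.2.1 (S.h1 (t + 1) x' v1),
         Fin.snoc (α := fun s : Fin (t + 1) => U1 s) sl.2.2 u1)),
   (S.h2 (t + 1) x' v2, u2))

/-- The (strategy-independent) likelihood `P(Z²_{t+1} = z | π², γ, u²)`. -/
def lik (S : Sys X U1 U2 W V1 V2 Y1 Y2) (P : PrimPMF X W V1 V2) (t : ℕ)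
    (π2 : X t × Lp Y1 U1 t → ℝ) (γ : (X t → ℝ) → U1 t) (u2 : U2 t)
    (z : Y2 (t + 1) × U2 t) : ℝ :=
  ∑ sl : X t × Lp Y1 U1 t, ∑ w : W t, ∑ v1 : V1 (t + 1), ∑ v2 : V2 (t + 1),
    if (stepS S t π2 γ u2 sl w v1 v2).2 = z then
      P.pW t w * P.pV1 (t + 1) v1 * P.pV2 (t + 1) v2 * π2 sl else 0

/-- The strategy-independent filter `f̃²_t` of Lemma 5 (Bayes update of `Π²`). -/
def ftilE (S : Sys X U1 U2 W V1 V2 Y1 Y2) (P : PrimPMF X W V1 V2) (t : ℕ)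
    (π2 : X t × Lp Y1 U1 t → ℝ) (γ : (X t → ℝ) → U1 t) (u2 : U2 t)
    (z : Y2 (t + 1) × U2 t) : X (t + 1) × Lp Y1 U1 (t + 1) → ℝ :=
  fun sl' =>
    (∑ sl : X t × Lp Y1 U1 t, ∑ w : W t, ∑ v1 : V1 (t + 1), ∑ v2 : V2 (t + 1),
      if stepS S t π2 γ u2 sl w v1 v2 = (sl', z) then
        P.pW t w * P.pV1 (t + 1) v1 * P.pV2 (t + 1) v2 * π2 sl else 0) /
      lik S P t π2 γ u2 z

/-- The function `c̃²_t` of Lemma 7: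
`c̃²_t(π², γ, u²) = E[c_t(X_t, Γ_t^{[2,1]}(Π¹_t), u²) | Π²_t = π²]`. -/
def ctilE (S : Sys X U1 U2 W V1 V2 Y1 Y2) (t : ℕ) (π2 : X t × Lp Y1 U1 t → ℝ)
    (γ : (X t → ℝ) → U1 t) (u2 : U2 t) : ℝ :=
  ∑ sl : X t × Lp Y1 U1 t, S.c t sl.1 (γ (eMap t π2 sl.2)) u2 * π2 sl

/-- The value functions of the dynamic program: for `t < T`,
`J_t(π²) = inf_{u², γ} [ c̃²_t(π², γ, u²) + E[J_{t+1}(Π²_{t+1}) | π², γ, u²] ]`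
(the conditional expectation being the strategy-independent expression given by
Lemmas 5 and 7), with the boundary condition `J_T = J²_T`, the two-sub-step
terminal value function
`J²_T(π²) = inf_{u²} Σ_l (Σ_x π²(x,l)) · inf_{u¹} Σ_x c_T(x,u¹,u²)·e_T(π²,l)(x)`. -/
def Jval (S : Sys X U1 U2 W V1 V2 Y1 Y2) (P : PrimPMF X W V1 V2) (T t : ℕ) :
    (X t × Lp Y1 U1 t → ℝ) → ℝ :=
  if h : T ≤ t then
    fun π2 => ⨅ u2 : U2 t, ∑ l : Lp Y1 U1 t, (∑ x, π2 (x, l)) *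
      ⨅ u1 : U1 t, ∑ x, S.c t x u1 u2 * eMap t π2 l x
  else
    fun π2 => ⨅ u2 : U2 t, ⨅ γ : (X t → ℝ) → U1 t,
      ctilE S t π2 γ u2 +
        ∑ z : Y2 (t + 1) × U2 t,
          lik S P t π2 γ u2 z * Jval S P T (t + 1) (ftilE S P t π2 γ u2 z)
termination_by T + 1 - t
decreasing_by omega

set_option linter.unusedSectionVars false

/-! ### Auxiliary lemmas -/

theorem resample {Ω α : Type*} [Fintype Ω] [Fintype α] (μ : Ω → ℝ) (p : α → ℝ)
    (hp : ∑ a, p a = 1) (up : Ω → α → Ω) (pr : Ω → α) (h1 : ∀ ω a, pr (up ω a) = a)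
    (h2 : ∀ ω a, up (up ω a) (pr ω) = ω) (h3 : ∀ ω a, μ (up ω a) * p (pr ω) = μ ω * p a)
    (F : Ω → α → ℝ) (hF : ∀ ω a b, F (up ω a) b = F ω b) :
    ∑ ω, μ ω * F ω (pr ω) = ∑ ω, μ ω * ∑ a, p a * F ω a := by
  have e : ∑ q : Ω × α, μ q.1 * p q.2 * F q.1 (pr q.1)
      = ∑ q : Ω × α, μ q.1 * p q.2 * F q.1 q.2 := by
    refine Finset.sum_nbij' (fun q => (up q.1 q.2, pr q.1)) (fun q => (up q.1 q.2, pr q.1))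
      (by simp) (by simp) ?_ ?_ ?_
    · rintro ⟨ω, a⟩ _; simp [h1, h2]
    · rintro ⟨ω, a⟩ _; simp [h1, h2]
    · rintro ⟨ω, a⟩ _; simp [h3, hF]
  rw [Fintype.sum_prod_type, Fintype.sum_prod_type] at e
  calc _ = ∑ ω, ∑ a, μ ω * p a * F ω (pr ω) := by
        refine Finset.sum_congr rfl fun ω _ => ?_
        rw [← Finset.sum_mul, ← Finset.mul_sum, hp, mul_one]
    _ = _ := by
        rw [e]
        refine Finset.sum_congr rfl fun ω _ => ?_
        rw [Finset.mul_sum]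
        exact Finset.sum_congr rfl fun a _ => by ring

theorem prod_upd {n : ℕ} {α : Fin n → Type*} (p : ∀ i, α i → ℝ) (w : ∀ i, α i) (i : Fin n)
    (a : α i) : (∏ s, p s (Function.update w i a s)) * p i (w i) = (∏ s, p s (w s)) * p i a := by
  rw [← Finset.mul_prod_erase _ _ (Finset.mem_univ i),
    ← Finset.mul_prod_erase _ (fun s => p s (w s)) (Finset.mem_univ i)]
  have : ∏ s ∈ Finset.univ.erase i, p s (Function.update w i a s)
      = ∏ s ∈ Finset.univ.erase i, p s (w s) := by
    refine Finset.prod_congr rfl fun s hs => ?_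
    rw [Function.update_of_ne (Finset.ne_of_mem_erase hs)]
  rw [this]; simp; ring

theorem indep_step (P : PrimPMF X W V1 V2) (T t : ℕ) (ht : t < T)
    (F : ΩT X W V1 V2 T → W t → V1 (t + 1) → V2 (t + 1) → ℝ)
    (hW : ∀ (ω : ΩT X W V1 V2 T) (a : W t), F (ω.1, Function.update ω.2.1 ⟨t, by omega⟩ a, ω.2.2.1, ω.2.2.2) = F ω)
    (hV1 : ∀ (ω : ΩT X W V1 V2 T) (a : V1 (t + 1)), F (ω.1, ω.2.1, Function.update ω.2.2.1 ⟨t + 1, by omega⟩ a, ω.2.2.2) = F ω)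
    (hV2 : ∀ (ω : ΩT X W V1 V2 T) (a : V2 (t + 1)), F (ω.1, ω.2.1, ω.2.2.1, Function.update ω.2.2.2 ⟨t + 1, by omega⟩ a) = F ω) :
    ∑ ω, mass P T ω * F ω (ω.2.1 ⟨t, by omega⟩) (ω.2.2.1 ⟨t + 1, by omega⟩)
        (ω.2.2.2 ⟨t + 1, by omega⟩)
      = ∑ ω, mass P T ω * ∑ w, ∑ v1, ∑ v2,
          P.pW t w * P.pV1 (t + 1) v1 * P.pV2 (t + 1) v2 * F ω w v1 v2 := by
  have s1 := resample (mass P T) (P.pW t) (P.pW_sum t)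
    (fun (ω : ΩT X W V1 V2 T) a => (ω.1, Function.update ω.2.1 ⟨t, by omega⟩ a, ω.2.2.1, ω.2.2.2))
    (fun ω => ω.2.1 ⟨t, by omega⟩) (by simp) (by simp)
    (fun ω a => by
      have := prod_upd (fun s : Fin (T + 1) => P.pW s) ω.2.1 ⟨t, by omega⟩ a
      simp only [mass] at this ⊢
      linear_combination (P.pX0 ω.1 * (∏ t : Fin (T + 1), P.pV1 t (ω.2.2.1 t)) *
        (∏ t : Fin (T + 1), P.pV2 t (ω.2.2.2 t))) * this)
    (fun ω w => F ω w (ω.2.2.1 ⟨t + 1, by omega⟩) (ω.2.2.2 ⟨t + 1, by omega⟩))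
    (fun ω a b => by simp only [hW])
  have s2 := resample (mass P T) (P.pV1 (t + 1)) (P.pV1_sum (t + 1))
    (fun (ω : ΩT X W V1 V2 T) a => (ω.1, ω.2.1, Function.update ω.2.2.1 ⟨t + 1, by omega⟩ a, ω.2.2.2))
    (fun ω => ω.2.2.1 ⟨t + 1, by omega⟩) (by simp) (by simp)
    (fun ω a => by
      have := prod_upd (fun s : Fin (T + 1) => P.pV1 s) ω.2.2.1 ⟨t + 1, by omega⟩ a
      simp only [mass] at this ⊢
      linear_combination (P.pX0 ω.1 * (∏ t : Fin (T + 1), P.pW t (ω.2.1 t)) *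
        (∏ t : Fin (T + 1), P.pV2 t (ω.2.2.2 t))) * this)
    (fun ω v => ∑ w, P.pW t w * F ω w v (ω.2.2.2 ⟨t + 1, by omega⟩))
    (fun ω a b => by simp only [hV1])
  have s3 := resample (mass P T) (P.pV2 (t + 1)) (P.pV2_sum (t + 1))
    (fun (ω : ΩT X W V1 V2 T) a => (ω.1, ω.2.1, ω.2.2.1, Function.update ω.2.2.2 ⟨t + 1, by omega⟩ a))
    (fun ω => ω.2.2.2 ⟨t + 1, by omega⟩) (by simp) (by simp)
    (fun ω a => by
      have := prod_upd (fun s : Fin (T + 1) => P.pV2 s) ω.2.2.2 ⟨t + 1, by omega⟩ a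
      simp only [mass] at this ⊢
      linear_combination (P.pX0 ω.1 * (∏ t : Fin (T + 1), P.pW t (ω.2.1 t)) *
        (∏ t : Fin (T + 1), P.pV1 t (ω.2.2.1 t))) * this)
    (fun ω v2 => ∑ v1, P.pV1 (t + 1) v1 * ∑ w, P.pW t w * F ω w v1 v2)
    (fun ω a b => by simp only [hV2])
  rw [s1, s2, s3]
  refine Finset.sum_congr rfl fun ω _ => ?_
  congr 1
  simp only [Finset.mul_sum]
  rw [Finset.sum_comm]
  rw [Finset.sum_congr rfl fun v1 _ => Finset.sum_comm]
  rw [Finset.sum_comm]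
  refine Finset.sum_congr rfl fun w _ => Finset.sum_congr rfl fun v1 _ =>
    Finset.sum_congr rfl fun v2 _ => by ring

theorem mass_nonneg (P : PrimPMF X W V1 V2) (T : ℕ) (ω : ΩT X W V1 V2 T) : 0 ≤ mass P T ω := by
  unfold mass
  have := P.pX0_nonneg ω.1
  have h1 := Finset.prod_nonneg (s := Finset.univ)
    fun (t : Fin (T + 1)) _ => P.pW_nonneg t (ω.2.1 t)
  have h2 := Finset.prod_nonneg (s := Finset.univ)
    fun (t : Fin (T + 1)) _ => P.pV1_nonneg t (ω.2.2.1 t)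
  have h3 := Finset.prod_nonneg (s := Finset.univ)
    fun (t : Fin (T + 1)) _ => P.pV2_nonneg t (ω.2.2.2 t)
  positivity

theorem hist_congr (S : Sys X U1 U2 W V1 V2 Y1 Y2) (g g' : Strat U1 U2 Y1 Y2)
    (ρ ρ' : Prim X W V1 V2) (t : ℕ) (hg : ∀ s, s < t → g.g1 s = g'.g1 s ∧ g.g2 s = g'.g2 s)
    (h0 : ρ.x0 = ρ'.x0) (hw : ∀ s, s < t → ρ.w s = ρ'.w s)
    (hv1 : ∀ s, s < t → ρ.v1 s = ρ'.v1 s) (hv2 : ∀ s, s < t → ρ.v2 s = ρ'.v2 s) :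
    hist S g ρ t = hist S g' ρ' t := by
  induction t with
  | zero => simp [hist, h0]
  | succ t ih =>
    have ih := ih (fun s hs => hg s (by omega)) (fun s hs => hw s (by omega))
      (fun s hs => hv1 s (by omega)) (fun s hs => hv2 s (by omega))
    have e1 : ∀ s : Fin (t + 1), ρ.v1 s = ρ'.v1 s := fun s => hv1 s s.2
    have e2 : ∀ s : Fin (t + 1), ρ.v2 s = ρ'.v2 s := fun s => hv2 s s.2
    simp only [hist, ih, e1, e2, hw t (by omega), (hg t (by omega)).1, (hg t (by omega)).2]

theorem traj_congr_prim (S : Sys X U1 U2 W V1 V2 Y1 Y2) (g : Strat U1 U2 Y1 Y2)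
    (ρ ρ' : Prim X W V1 V2) (t : ℕ)
    (h0 : ρ.x0 = ρ'.x0) (hw : ∀ s, s < t → ρ.w s = ρ'.w s)
    (hv1 : ∀ s, s ≤ t → ρ.v1 s = ρ'.v1 s) (hv2 : ∀ s, s ≤ t → ρ.v2 s = ρ'.v2 s) :
    xTraj S g ρ t = xTraj S g ρ' t ∧ lpTraj S g ρ t = lpTraj S g ρ' t ∧
      m2Traj S g ρ t = m2Traj S g ρ' t := by
  have e := hist_congr S g g ρ ρ' t (fun _ _ => ⟨rfl, rfl⟩) h0 hw
    (fun s hs => hv1 s hs.le) (fun s hs => hv2 s hs.le)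
  have e1 : ∀ s : Fin (t + 1), ρ.v1 s = ρ'.v1 s := fun s => hv1 s (by omega)
  have e2 : ∀ s : Fin (t + 1), ρ.v2 s = ρ'.v2 s := fun s => hv2 s (by omega)
  simp only [xTraj, lpTraj, m2Traj, e, e1, e2, and_self]

theorem traj_congr_strat (S : Sys X U1 U2 W V1 V2 Y1 Y2) (g g' : Strat U1 U2 Y1 Y2)
    (t : ℕ) (hg : ∀ s, s < t → g.g1 s = g'.g1 s ∧ g.g2 s = g'.g2 s) (ρ : Prim X W V1 V2) :
    xTraj S g ρ t = xTraj S g' ρ t ∧ lpTraj S g ρ t = lpTraj S g' ρ t ∧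
      m2Traj S g ρ t = m2Traj S g' ρ t := by
  have e := hist_congr S g g' ρ ρ t hg rfl (fun _ _ => rfl) (fun _ _ => rfl) (fun _ _ => rfl)
  simp only [xTraj, lpTraj, m2Traj, e, and_self]

theorem hist_succ_1 (S : Sys X U1 U2 W V1 V2 Y1 Y2) (g : Strat U1 U2 Y1 Y2)
    (ρ : Prim X W V1 V2) (t : ℕ) : (hist S g ρ (t + 1)).1 =
      Fin.snoc (α := fun s : Fin (t + 2) => X s) (hist S g ρ t).1
        (S.f t (xTraj S g ρ t) (u1Traj S g ρ t) (u2Traj S g ρ t) (ρ.w t)) := rfl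

theorem hist_succ_2 (S : Sys X U1 U2 W V1 V2 Y1 Y2) (g : Strat U1 U2 Y1 Y2)
    (ρ : Prim X W V1 V2) (t : ℕ) : (hist S g ρ (t + 1)).2 =
      Fin.snoc (α := fun s : Fin (t + 1) => U1 s × U2 s) (hist S g ρ t).2
        (u1Traj S g ρ t, u2Traj S g ρ t) := rfl

theorem xTraj_succ (S : Sys X U1 U2 W V1 V2 Y1 Y2) (g : Strat U1 U2 Y1 Y2)
    (ρ : Prim X W V1 V2) (t : ℕ) : xTraj S g ρ (t + 1) =
      S.f t (xTraj S g ρ t) (u1Traj S g ρ t) (u2Traj S g ρ t) (ρ.w t) := by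
  rw [xTraj, hist_succ_1]
  exact Fin.snoc_last (α := fun s : Fin (t + 2) => X s) _ _

theorem hist_castSucc_1 (S : Sys X U1 U2 W V1 V2 Y1 Y2) (g : Strat U1 U2 Y1 Y2)
    (ρ : Prim X W V1 V2) (t : ℕ) (i : Fin (t + 1)) :
    (hist S g ρ (t + 1)).1 i.castSucc = (hist S g ρ t).1 i := by
  rw [hist_succ_1]
  exact Fin.snoc_castSucc (α := fun s : Fin (t + 2) => X s) _ _ _

theorem hist_castSucc_2 (S : Sys X U1 U2 W V1 V2 Y1 Y2) (g : Strat U1 U2 Y1 Y2)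
    (ρ : Prim X W V1 V2) (t : ℕ) (i : Fin t) :
    (hist S g ρ (t + 1)).2 i.castSucc = (hist S g ρ t).2 i := by
  rw [hist_succ_2]
  exact Fin.snoc_castSucc (α := fun s : Fin (t + 1) => U1 s × U2 s) _ _ _

theorem hist_last_2 (S : Sys X U1 U2 W V1 V2 Y1 Y2) (g : Strat U1 U2 Y1 Y2)
    (ρ : Prim X W V1 V2) (t : ℕ) :
    (hist S g ρ (t + 1)).2 (Fin.last t) = (u1Traj S g ρ t, u2Traj S g ρ t) := by
  rw [hist_succ_2]
  exact Fin.snoc_last (α := fun s : Fin (t + 1) => U1 s × U2 s) _ _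

theorem lpTraj_succ (S : Sys X U1 U2 W V1 V2 Y1 Y2) (g : Strat U1 U2 Y1 Y2)
    (ρ : Prim X W V1 V2) (t : ℕ) : lpTraj S g ρ (t + 1) =
      (Fin.snoc (α := fun s : Fin (t + 2) => Y1 s) (lpTraj S g ρ t).1 (y1Traj S g ρ (t + 1)),
       Fin.snoc (α := fun s : Fin (t + 1) => U1 s) (lpTraj S g ρ t).2 (u1Traj S g ρ t)) := by
  refine Prod.ext ?_ ?_
  · funext i
    refine Fin.lastCases ?_ (fun i => ?_) i
    · exact (Fin.snoc_last (α := fun s : Fin (t + 2) => Y1 s) _ _).symm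
    · refine Eq.trans ?_ (Fin.snoc_castSucc (α := fun s : Fin (t + 2) => Y1 s) _ _ _).symm
      exact congrArg (fun x => S.h1 i x (ρ.v1 i)) (hist_castSucc_1 S g ρ t i)
  · funext i
    refine Fin.lastCases ?_ (fun i => ?_) i
    · refine Eq.trans ?_ (Fin.snoc_last (α := fun s : Fin (t + 1) => U1 s) _ _).symm
      exact congrArg Prod.fst (hist_last_2 S g ρ t)
    · refine Eq.trans ?_ (Fin.snoc_castSucc (α := fun s : Fin (t + 1) => U1 s) _ _ _).symm
      exact congrArg Prod.fst (hist_castSucc_2 S g ρ t i)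

theorem m2Traj_succ (S : Sys X U1 U2 W V1 V2 Y1 Y2) (g : Strat U1 U2 Y1 Y2)
    (ρ : Prim X W V1 V2) (t : ℕ) : m2Traj S g ρ (t + 1) =
      (Fin.snoc (α := fun s : Fin (t + 2) => Y2 s) (m2Traj S g ρ t).1 (y2Traj S g ρ (t + 1)),
       Fin.snoc (α := fun s : Fin (t + 1) => U2 s) (m2Traj S g ρ t).2 (u2Traj S g ρ t)) := by
  refine Prod.ext ?_ ?_
  · funext i
    refine Fin.lastCases ?_ (fun i => ?_) i
    · exact (Fin.snoc_last (α := fun s : Fin (t + 2) => Y2 s) _ _).symm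
    · refine Eq.trans ?_ (Fin.snoc_castSucc (α := fun s : Fin (t + 2) => Y2 s) _ _ _).symm
      exact congrArg (fun x => S.h2 i x (ρ.v2 i)) (hist_castSucc_1 S g ρ t i)
  · funext i
    refine Fin.lastCases ?_ (fun i => ?_) i
    · refine Eq.trans ?_ (Fin.snoc_last (α := fun s : Fin (t + 1) => U2 s) _ _).symm
      exact congrArg Prod.snd (hist_last_2 S g ρ t)
    · refine Eq.trans ?_ (Fin.snoc_castSucc (α := fun s : Fin (t + 1) => U2 s) _ _ _).symm
      exact congrArg Prod.snd (hist_castSucc_2 S g ρ t i)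

theorem m2Traj_succ_iff (S : Sys X U1 U2 W V1 V2 Y1 Y2) (g : Strat U1 U2 Y1 Y2)
    (ρ ρ' : Prim X W V1 V2) (t : ℕ) : m2Traj S g ρ (t + 1) = m2Traj S g ρ' (t + 1) ↔
      m2Traj S g ρ t = m2Traj S g ρ' t ∧ z2Traj S g ρ t = z2Traj S g ρ' t := by
  constructor
  · intro h
    rw [m2Traj_succ, m2Traj_succ] at h
    have h1 := congrArg Prod.fst h
    have h2 := congrArg Prod.snd h
    obtain ⟨a1, a2⟩ := (Fin.snoc_inj (α := fun s : Fin (t + 2) => Y2 s)).1 h1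
    obtain ⟨b1, b2⟩ := (Fin.snoc_inj (α := fun s : Fin (t + 1) => U2 s)).1 h2
    exact ⟨Prod.ext a1 b1, Prod.ext a2 b2⟩
  · rintro ⟨h1, h2⟩
    have a := congrArg Prod.fst h2
    have b := congrArg Prod.snd h2
    simp only [z2Traj] at a b
    rw [m2Traj_succ, m2Traj_succ, h1, a, b]

/-- `Π²` as a function of agent 2's memory. -/
def is2 (S : Sys X U1 U2 W V1 V2 Y1 Y2) (g : Strat U1 U2 Y1 Y2)
    (P : PrimPMF X W V1 V2) (T : ℕ) (t : ℕ) (m : M2 Y2 U2 t) : X t × Lp Y1 U1 t → ℝ :=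
  fun sl => condProb (mass P T)
    (fun ω' => (xTraj S g (toPrim T ω') t, lpTraj S g (toPrim T ω') t) = sl)
    (fun ω' => m2Traj S g (toPrim T ω') t = m)

/-- `Π¹` as a function of agent 1's memory. -/
def is1 (S : Sys X U1 U2 W V1 V2 Y1 Y2) (g : Strat U1 U2 Y1 Y2)
    (P : PrimPMF X W V1 V2) (T : ℕ) (t : ℕ) (m : M1 Y1 Y2 U1 U2 t) : X t → ℝ :=
  fun x => condProb (mass P T)
    (fun ω' => xTraj S g (toPrim T ω') t = x)
    (fun ω' => m1Traj S g (toPrim T ω') t = m)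

theorem infoState2_eq (S : Sys X U1 U2 W V1 V2 Y1 Y2) (g : Strat U1 U2 Y1 Y2)
    (P : PrimPMF X W V1 V2) (T : ℕ) (ω : ΩT X W V1 V2 T) (t : ℕ) :
    infoState2 S g P T ω t = is2 S g P T t (m2Traj S g (toPrim T ω) t) := rfl

theorem infoState1_eq (S : Sys X U1 U2 W V1 V2 Y1 Y2) (g : Strat U1 U2 Y1 Y2)
    (P : PrimPMF X W V1 V2) (T : ℕ) (ω : ΩT X W V1 V2 T) (t : ℕ) :
    infoState1 S g P T ω t = is1 S g P T t (m1Traj S g (toPrim T ω) t) := rfl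

/-- Probability of agent 2's memory. -/
def pM2 (S : Sys X U1 U2 W V1 V2 Y1 Y2) (g : Strat U1 U2 Y1 Y2)
    (P : PrimPMF X W V1 V2) (T : ℕ) (t : ℕ) (m : M2 Y2 U2 t) : ℝ :=
  ∑ ω : ΩT X W V1 V2 T, if m2Traj S g (toPrim T ω) t = m then mass P T ω else 0

theorem pM2_pos (S : Sys X U1 U2 W V1 V2 Y1 Y2) (g : Strat U1 U2 Y1 Y2)
    (P : PrimPMF X W V1 V2) (T : ℕ) (t : ℕ) (ω : ΩT X W V1 V2 T) (h : 0 < mass P T ω) :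
    0 < pM2 S g P T t (m2Traj S g (toPrim T ω) t) := by
  refine Finset.sum_pos' (fun ω' _ => ?_) ⟨ω, Finset.mem_univ _, by simpa using h⟩
  split_ifs
  · exact mass_nonneg P T ω'
  · exact le_rfl

theorem tower (S : Sys X U1 U2 W V1 V2 Y1 Y2) (g : Strat U1 U2 Y1 Y2)
    (P : PrimPMF X W V1 V2) (T : ℕ) (t : ℕ) (G : ΩT X W V1 V2 T → ℝ) (B : M2 Y2 U2 t → ℝ)
    (h : ∀ m, 0 < pM2 S g P T t m →
      (∑ ω : ΩT X W V1 V2 T, if m2Traj S g (toPrim T ω) t = m then mass P T ω * G ω else 0)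
        = pM2 S g P T t m * B m) :
    ∑ ω, mass P T ω * G ω = ∑ ω, mass P T ω * B (m2Traj S g (toPrim T ω) t) := by
  rw [← Finset.sum_fiberwise (s := Finset.univ)
      (g := fun ω : ΩT X W V1 V2 T => m2Traj S g (toPrim T ω) t),
    ← Finset.sum_fiberwise (s := Finset.univ)
      (g := fun ω : ΩT X W V1 V2 T => m2Traj S g (toPrim T ω) t)
      (f := fun ω => mass P T ω * B (m2Traj S g (toPrim T ω) t))]
  refine Finset.sum_congr rfl fun m _ => ?_
  rw [Finset.sum_filter, Finset.sum_filter]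
  have e : (∑ ω : ΩT X W V1 V2 T, if m2Traj S g (toPrim T ω) t = m then
      mass P T ω * B (m2Traj S g (toPrim T ω) t) else 0) = pM2 S g P T t m * B m := by
    rw [pM2, Finset.sum_mul]
    refine Finset.sum_congr rfl fun ω _ => ?_
    split_ifs with hh
    · rw [hh]
    · simp
  rw [e]
  by_cases hm : 0 < pM2 S g P T t m
  · exact h m hm
  · have hz : ∀ ω : ΩT X W V1 V2 T, m2Traj S g (toPrim T ω) t = m → mass P T ω = 0 := by
      intro ω hω
      by_contra hne
      exact hm (hω ▸ pM2_pos S g P T t ω (lt_of_le_of_ne (mass_nonneg P T ω) (Ne.symm hne)))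
    have hp : pM2 S g P T t m = 0 := by
      refine Finset.sum_eq_zero fun ω _ => ?_
      split_ifs with hh
      · exact hz ω hh
      · rfl
    rw [hp, zero_mul]
    refine Finset.sum_eq_zero fun ω _ => ?_
    split_ifs with hh
    · rw [hz ω hh, zero_mul]
    · rfl

theorem is2_nonneg (S : Sys X U1 U2 W V1 V2 Y1 Y2) (g : Strat U1 U2 Y1 Y2)
    (P : PrimPMF X W V1 V2) (T : ℕ) (t : ℕ) (m : M2 Y2 U2 t) (sl) :
    0 ≤ is2 S g P T t m sl := by
  refine div_nonneg (Finset.sum_nonneg fun ω _ => ?_) (Finset.sum_nonneg fun ω _ => ?_) <;>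
  · split_ifs
    · exact mass_nonneg P T ω
    · exact le_rfl

theorem is2_sum (S : Sys X U1 U2 W V1 V2 Y1 Y2) (g : Strat U1 U2 Y1 Y2)
    (P : PrimPMF X W V1 V2) (T : ℕ) (t : ℕ) (m : M2 Y2 U2 t) (hm : 0 < pM2 S g P T t m)
    (K : X t × Lp Y1 U1 t → ℝ) :
    pM2 S g P T t m * ∑ sl, is2 S g P T t m sl * K sl =
      ∑ ω : ΩT X W V1 V2 T, if m2Traj S g (toPrim T ω) t = m then
        mass P T ω * K (xTraj S g (toPrim T ω) t, lpTraj S g (toPrim T ω) t) else 0 := by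
  have e : ∀ sl, pM2 S g P T t m * (is2 S g P T t m sl * K sl) =
      ∑ ω : ΩT X W V1 V2 T, if (xTraj S g (toPrim T ω) t, lpTraj S g (toPrim T ω) t) = sl then
        (if m2Traj S g (toPrim T ω) t = m then mass P T ω * K sl else 0) else 0 := by
    intro sl
    have : is2 S g P T t m sl = (∑ ω : ΩT X W V1 V2 T,
      if (xTraj S g (toPrim T ω) t, lpTraj S g (toPrim T ω) t) = sl ∧
        m2Traj S g (toPrim T ω) t = m then mass P T ω else 0) / pM2 S g P T t m := by
      unfold is2 condProb pM2
      congr!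
    rw [this, ← mul_assoc, mul_div_cancel₀ _ hm.ne', Finset.sum_mul]
    refine Finset.sum_congr rfl fun ω _ => ?_
    by_cases h1 : (xTraj S g (toPrim T ω) t, lpTraj S g (toPrim T ω) t) = sl <;>
    by_cases h2 : m2Traj S g (toPrim T ω) t = m <;> simp [h1, h2]
  rw [Finset.mul_sum, Finset.sum_congr rfl fun sl _ => e sl, Finset.sum_comm]
  refine Finset.sum_congr rfl fun ω _ => ?_
  rw [Finset.sum_ite_eq]
  simp

theorem eMap_is2 (S : Sys X U1 U2 W V1 V2 Y1 Y2) (g : Strat U1 U2 Y1 Y2)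
    (P : PrimPMF X W V1 V2) (T : ℕ) (t : ℕ) (ω : ΩT X W V1 V2 T) (h : 0 < mass P T ω) :
    eMap t (is2 S g P T t (m2Traj S g (toPrim T ω) t)) (lpTraj S g (toPrim T ω) t) =
      infoState1 S g P T ω t := by
  have hm := pM2_pos S g P T t ω h
  funext x
  set m := m2Traj S g (toPrim T ω) t with hmd
  set l := lpTraj S g (toPrim T ω) t with hld
  have key : ∀ A : X t → ℝ, pM2 S g P T t m * ∑ x', is2 S g P T t m (x', l) * A x' =
      ∑ ω' : ΩT X W V1 V2 T, if m1Traj S g (toPrim T ω') t = (l, m) then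
        mass P T ω' * A (xTraj S g (toPrim T ω') t) else 0 := by
    intro A
    have := is2_sum S g P T t m hm (fun sl => if sl.2 = l then A sl.1 else 0)
    rw [Fintype.sum_prod_type] at this
    simp only [mul_ite, mul_zero, Finset.sum_ite_eq', Finset.mem_univ, if_true] at this
    rw [this]
    refine Finset.sum_congr rfl fun ω' _ => ?_
    by_cases h1 : m2Traj S g (toPrim T ω') t = m <;>
    by_cases h2 : lpTraj S g (toPrim T ω') t = l <;> simp [h1, h2, m1Traj]
  have k1 := key (fun _ => 1)
  have k2 := key (fun x' => if x' = x then 1 else 0)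
  simp only [mul_ite, mul_one, mul_zero, Finset.sum_ite_eq', Finset.mem_univ, if_true] at k1 k2
  have : infoState1 S g P T ω t x = (∑ ω' : ΩT X W V1 V2 T,
      if xTraj S g (toPrim T ω') t = x ∧ m1Traj S g (toPrim T ω') t = (l, m) then
        mass P T ω' else 0) / (∑ ω' : ΩT X W V1 V2 T,
      if m1Traj S g (toPrim T ω') t = (l, m) then mass P T ω' else 0) := by
    unfold infoState1 condProb
    congr!
  rw [this, ← k1]
  have k2' : (∑ ω' : ΩT X W V1 V2 T,
      if xTraj S g (toPrim T ω') t = x ∧ m1Traj S g (toPrim T ω') t = (l, m) then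
        mass P T ω' else 0) = pM2 S g P T t m * is2 S g P T t m (x, l) := by
    rw [k2]
    refine Finset.sum_congr rfl fun ω' _ => ?_
    by_cases h1 : m1Traj S g (toPrim T ω') t = (l, m) <;> simp [h1]
  rw [k2', mul_div_mul_left _ _ hm.ne']
  rfl

/-- The prescription `G` (as a function of `M²_t`) generates agent 1's action at time `t`. -/
def Gen (S : Sys X U1 U2 W V1 V2 Y1 Y2) (g : Strat U1 U2 Y1 Y2)
    (P : PrimPMF X W V1 V2) (T : ℕ) (t : ℕ) (G : M2 Y2 U2 t → (X t → ℝ) → U1 t) : Prop :=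
  ∀ ω : ΩT X W V1 V2 T, 0 < mass P T ω → u1Traj S g (toPrim T ω) t =
    G (m2Traj S g (toPrim T ω) t) (infoState1 S g P T ω t)

theorem cost_cond (S : Sys X U1 U2 W V1 V2 Y1 Y2) (g : Strat U1 U2 Y1 Y2)
    (P : PrimPMF X W V1 V2) (T : ℕ) (t : ℕ) (G : M2 Y2 U2 t → (X t → ℝ) → U1 t)
    (hG : Gen S g P T t G) (m : M2 Y2 U2 t) (hm : 0 < pM2 S g P T t m) :
    (∑ ω : ΩT X W V1 V2 T, if m2Traj S g (toPrim T ω) t = m then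
      mass P T ω * stageCost S g (toPrim T ω) t else 0)
      = pM2 S g P T t m * ctilE S t (is2 S g P T t m) (G m) (g.g2 t m) := by
  have := is2_sum S g P T t m hm
    (fun sl => S.c t sl.1 (G m (eMap t (is2 S g P T t m) sl.2)) (g.g2 t m))
  have e : ctilE S t (is2 S g P T t m) (G m) (g.g2 t m) = ∑ sl, is2 S g P T t m sl *
      S.c t sl.1 (G m (eMap t (is2 S g P T t m) sl.2)) (g.g2 t m) :=
    Finset.sum_congr rfl fun sl _ => mul_comm _ _
  rw [e, this]
  refine Finset.sum_congr rfl fun ω _ => ?_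
  split_ifs with h
  · rcases (mass_nonneg P T ω).eq_or_lt with h0 | h0
    · rw [← h0, zero_mul, zero_mul]
    · subst h
      simp only
      rw [eMap_is2 S g P T t ω h0, stageCost, hG ω h0]
      rfl
  · rfl

theorem ext_update {α : ℕ → Type} [∀ t, Inhabited (α t)] (T : ℕ) (a : (t : Fin (T + 1)) → α t)
    (i : Fin (T + 1)) (b : α i) (s : ℕ) (h : s ≠ i) :
    ext T (Function.update a i b) s = ext T a s := by
  unfold ext
  split_ifs with hs
  · rw [Function.update_of_ne]
    intro hh
    exact h (congrArg Fin.val hh)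
  · rfl

theorem ext_eq {α : ℕ → Type} [∀ t, Inhabited (α t)] (T : ℕ) (a : (t : Fin (T + 1)) → α t)
    (s : ℕ) (h : s < T + 1) : ext T a s = a ⟨s, h⟩ := by
  unfold ext
  rw [dif_pos h]

theorem stepS_traj (S : Sys X U1 U2 W V1 V2 Y1 Y2) (g : Strat U1 U2 Y1 Y2)
    (P : PrimPMF X W V1 V2) (T : ℕ) (t : ℕ) (G : M2 Y2 U2 t → (X t → ℝ) → U1 t)
    (hG : Gen S g P T t G) (ht : t < T) (ω : ΩT X W V1 V2 T) (h : 0 < mass P T ω) :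
    stepS S t (is2 S g P T t (m2Traj S g (toPrim T ω) t)) (G (m2Traj S g (toPrim T ω) t))
      (g.g2 t (m2Traj S g (toPrim T ω) t))
      (xTraj S g (toPrim T ω) t, lpTraj S g (toPrim T ω) t)
      (ω.2.1 ⟨t, by omega⟩) (ω.2.2.1 ⟨t + 1, by omega⟩) (ω.2.2.2 ⟨t + 1, by omega⟩) =
    ((xTraj S g (toPrim T ω) (t + 1), lpTraj S g (toPrim T ω) (t + 1)),
      z2Traj S g (toPrim T ω) t) := by
  have hu := hG ω h
  rw [← eMap_is2 S g P T t ω h] at hu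
  rw [lpTraj_succ]
  have w1 : (toPrim T ω).w t = ω.2.1 ⟨t, by omega⟩ := ext_eq T ω.2.1 t (by omega)
  have w2 : (toPrim T ω).v1 (t + 1) = ω.2.2.1 ⟨t + 1, by omega⟩ :=
    ext_eq T ω.2.2.1 (t + 1) (by omega)
  have w3 : (toPrim T ω).v2 (t + 1) = ω.2.2.2 ⟨t + 1, by omega⟩ :=
    ext_eq T ω.2.2.2 (t + 1) (by omega)
  rw [← w1, ← w2, ← w3]
  simp only [stepS, ← hu, z2Traj, y1Traj, y2Traj, xTraj_succ, u2Traj]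

theorem step_cond (S : Sys X U1 U2 W V1 V2 Y1 Y2) (g : Strat U1 U2 Y1 Y2)
    (P : PrimPMF X W V1 V2) (T : ℕ) (t : ℕ) (G : M2 Y2 U2 t → (X t → ℝ) → U1 t)
    (hG : Gen S g P T t G) (ht : t < T) (m : M2 Y2 U2 t) (hm : 0 < pM2 S g P T t m)
    (R : (X (t + 1) × Lp Y1 U1 (t + 1)) × (Y2 (t + 1) × U2 t) → Prop) :
    pM2 S g P T t m * (∑ sl : X t × Lp Y1 U1 t, ∑ w : W t, ∑ v1 : V1 (t + 1), ∑ v2 : V2 (t + 1),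
      if R (stepS S t (is2 S g P T t m) (G m) (g.g2 t m) sl w v1 v2) then
        P.pW t w * P.pV1 (t + 1) v1 * P.pV2 (t + 1) v2 * is2 S g P T t m sl else 0) =
    ∑ ω : ΩT X W V1 V2 T, if m2Traj S g (toPrim T ω) t = m ∧
      R ((xTraj S g (toPrim T ω) (t + 1), lpTraj S g (toPrim T ω) (t + 1)),
        z2Traj S g (toPrim T ω) t) then mass P T ω else 0 := by
  set F : ΩT X W V1 V2 T → W t → V1 (t + 1) → V2 (t + 1) → ℝ := fun ω w v1 v2 =>
    if m2Traj S g (toPrim T ω) t = m ∧ R (stepS S t (is2 S g P T t m) (G m) (g.g2 t m)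
      (xTraj S g (toPrim T ω) t, lpTraj S g (toPrim T ω) t) w v1 v2) then 1 else 0 with hF
  have hFc : ∀ ω ω' : ΩT X W V1 V2 T, ω.1 = ω'.1 →
      (∀ s, s < t → (toPrim T ω).w s = (toPrim T ω').w s) →
      (∀ s, s ≤ t → (toPrim T ω).v1 s = (toPrim T ω').v1 s) →
      (∀ s, s ≤ t → (toPrim T ω).v2 s = (toPrim T ω').v2 s) → F ω = F ω' := by
    intro ω ω' h0 hw h1 h2
    obtain ⟨a, b, c⟩ := traj_congr_prim S g (toPrim T ω) (toPrim T ω') t h0 hw h1 h2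
    simp only [hF, a, b, c]
  have key := indep_step P T t ht F
    (fun ω a => hFc _ _ rfl (fun s hs => ext_update T ω.2.1 ⟨t, by omega⟩ a s hs.ne)
      (fun _ _ => rfl) (fun _ _ => rfl))
    (fun ω a => hFc _ _ rfl (fun _ _ => rfl)
      (fun s hs => ext_update T ω.2.2.1 ⟨t + 1, by omega⟩ a s (by simp; omega)) (fun _ _ => rfl))
    (fun ω a => hFc _ _ rfl (fun _ _ => rfl) (fun _ _ => rfl)
      (fun s hs => ext_update T ω.2.2.2 ⟨t + 1, by omega⟩ a s (by simp; omega)))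
  have e1 := is2_sum S g P T t m hm (fun sl => ∑ w : W t, ∑ v1 : V1 (t + 1), ∑ v2 : V2 (t + 1),
    P.pW t w * P.pV1 (t + 1) v1 * P.pV2 (t + 1) v2 *
      if R (stepS S t (is2 S g P T t m) (G m) (g.g2 t m) sl w v1 v2) then 1 else 0)
  have e2 : (∑ sl : X t × Lp Y1 U1 t, ∑ w : W t, ∑ v1 : V1 (t + 1), ∑ v2 : V2 (t + 1),
      if R (stepS S t (is2 S g P T t m) (G m) (g.g2 t m) sl w v1 v2) then
        P.pW t w * P.pV1 (t + 1) v1 * P.pV2 (t + 1) v2 * is2 S g P T t m sl else 0) =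
      ∑ sl, is2 S g P T t m sl * ∑ w : W t, ∑ v1 : V1 (t + 1), ∑ v2 : V2 (t + 1),
      P.pW t w * P.pV1 (t + 1) v1 * P.pV2 (t + 1) v2 *
      if R (stepS S t (is2 S g P T t m) (G m) (g.g2 t m) sl w v1 v2) then 1 else 0 := by
    simp only [Finset.mul_sum]
    refine Finset.sum_congr rfl fun sl _ => Finset.sum_congr rfl fun w _ =>
      Finset.sum_congr rfl fun v1 _ => Finset.sum_congr rfl fun v2 _ => ?_
    split_ifs <;> ring
  have e3 : (∑ ω : ΩT X W V1 V2 T, if m2Traj S g (toPrim T ω) t = m ∧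
      R ((xTraj S g (toPrim T ω) (t + 1), lpTraj S g (toPrim T ω) (t + 1)),
        z2Traj S g (toPrim T ω) t) then mass P T ω else 0) =
      ∑ ω, mass P T ω * F ω (ω.2.1 ⟨t, by omega⟩) (ω.2.2.1 ⟨t + 1, by omega⟩)
        (ω.2.2.2 ⟨t + 1, by omega⟩) := by
    refine Finset.sum_congr rfl fun ω _ => ?_
    rcases (mass_nonneg P T ω).eq_or_lt with h0 | h0
    · rw [← h0, zero_mul, ite_self]
    · by_cases h : m2Traj S g (toPrim T ω) t = m
      · subst h
        simp only [hF, stepS_traj S g P T t G hG ht ω h0, mul_ite, mul_one, mul_zero]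
      · simp [hF, h]
  rw [e2, e1, e3, key]
  refine Finset.sum_congr rfl fun ω _ => ?_
  split_ifs with h
  · simp only [hF, h, true_and]
  · simp only [hF, h, false_and, if_false, mul_zero, Finset.sum_const_zero]

theorem lik_cond (S : Sys X U1 U2 W V1 V2 Y1 Y2) (g : Strat U1 U2 Y1 Y2)
    (P : PrimPMF X W V1 V2) (T : ℕ) (t : ℕ) (G : M2 Y2 U2 t → (X t → ℝ) → U1 t)
    (hG : Gen S g P T t G) (ht : t < T) (m : M2 Y2 U2 t) (hm : 0 < pM2 S g P T t m)
    (z : Y2 (t + 1) × U2 t) :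
    pM2 S g P T t m * lik S P t (is2 S g P T t m) (G m) (g.g2 t m) z =
    ∑ ω : ΩT X W V1 V2 T, if m2Traj S g (toPrim T ω) t = m ∧
      z2Traj S g (toPrim T ω) t = z then mass P T ω else 0 := by
  unfold lik
  convert step_cond S g P T t G hG ht m hm (fun q => q.2 = z)

theorem ite_iff {p q : Prop} {dp : Decidable p} {dq : Decidable q} (h : p ↔ q) (a : ℝ) :
    @ite ℝ p dp a 0 = @ite ℝ q dq a 0 := by
  by_cases hp : p
  · rw [if_pos hp, if_pos (h.1 hp)]
  · rw [if_neg hp, if_neg (fun hq => hp (h.2 hq))]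

theorem filter_eq (S : Sys X U1 U2 W V1 V2 Y1 Y2) (g : Strat U1 U2 Y1 Y2)
    (P : PrimPMF X W V1 V2) (T : ℕ) (t : ℕ) (G : M2 Y2 U2 t → (X t → ℝ) → U1 t)
    (hG : Gen S g P T t G) (ht : t < T) (ω : ΩT X W V1 V2 T) (h : 0 < mass P T ω) :
    infoState2 S g P T ω (t + 1) = ftilE S P t (is2 S g P T t (m2Traj S g (toPrim T ω) t))
      (G (m2Traj S g (toPrim T ω) t)) (g.g2 t (m2Traj S g (toPrim T ω) t))
      (z2Traj S g (toPrim T ω) t) := by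
  have hm := pM2_pos S g P T t ω h
  funext sl'
  have a := lik_cond S g P T t G hG ht _ hm (z2Traj S g (toPrim T ω) t)
  have b := step_cond S g P T t G hG ht _ hm (fun q => q = (sl', z2Traj S g (toPrim T ω) t))
  rw [ftilE, ← mul_div_mul_left _ _ hm.ne', a, infoState2, condProb]
  refine Eq.trans ?_ (congrArg (· / _) (Eq.trans b.symm ?_))
  swap
  · congr!
  congr 1
  · refine Finset.sum_congr rfl fun ω' _ => ?_
    refine ite_iff ?_ _
    rw [m2Traj_succ_iff]
    exact ⟨fun ⟨a, b, c⟩ => ⟨b, Prod.ext a c⟩,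
      fun ⟨b, d⟩ => ⟨congrArg Prod.fst d, b, congrArg Prod.snd d⟩⟩
  · refine Finset.sum_congr rfl fun ω' _ => ?_
    refine ite_iff ?_ _
    rw [m2Traj_succ_iff]

theorem value_cond (S : Sys X U1 U2 W V1 V2 Y1 Y2) (g : Strat U1 U2 Y1 Y2)
    (P : PrimPMF X W V1 V2) (T : ℕ) (t : ℕ) (G : M2 Y2 U2 t → (X t → ℝ) → U1 t)
    (hG : Gen S g P T t G) (ht : t < T) (m : M2 Y2 U2 t) (hm : 0 < pM2 S g P T t m)
    (V : (X (t + 1) × Lp Y1 U1 (t + 1) → ℝ) → ℝ) :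
    (∑ ω : ΩT X W V1 V2 T, if m2Traj S g (toPrim T ω) t = m then
      mass P T ω * V (infoState2 S g P T ω (t + 1)) else 0)
      = pM2 S g P T t m * ∑ z : Y2 (t + 1) × U2 t,
          lik S P t (is2 S g P T t m) (G m) (g.g2 t m) z *
            V (ftilE S P t (is2 S g P T t m) (G m) (g.g2 t m) z) := by
  have e : ∀ z, pM2 S g P T t m * (lik S P t (is2 S g P T t m) (G m) (g.g2 t m) z *
            V (ftilE S P t (is2 S g P T t m) (G m) (g.g2 t m) z)) =
      ∑ ω : ΩT X W V1 V2 T, if z2Traj S g (toPrim T ω) t = z then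
        (if m2Traj S g (toPrim T ω) t = m then mass P T ω *
          V (ftilE S P t (is2 S g P T t m) (G m) (g.g2 t m) z) else 0) else 0 := by
    intro z
    rw [← mul_assoc, lik_cond S g P T t G hG ht _ hm, Finset.sum_mul]
    refine Finset.sum_congr rfl fun ω _ => ?_
    by_cases h1 : z2Traj S g (toPrim T ω) t = z <;>
    by_cases h2 : m2Traj S g (toPrim T ω) t = m <;> simp [h1, h2]
  rw [Finset.mul_sum, Finset.sum_congr rfl fun z _ => e z, Finset.sum_comm]
  refine Finset.sum_congr rfl fun ω _ => ?_
  rw [Finset.sum_ite_eq]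
  simp only [Finset.mem_univ, if_true]
  split_ifs with h
  · rcases (mass_nonneg P T ω).eq_or_lt with h0 | h0
    · rw [← h0, zero_mul, zero_mul]
    · rw [filter_eq S g P T t G hG ht ω h0, h]
  · rfl

/-- The bracket minimized in the dynamic program. -/
def Qv (S : Sys X U1 U2 W V1 V2 Y1 Y2) (P : PrimPMF X W V1 V2) (T t : ℕ)
    (π2 : X t × Lp Y1 U1 t → ℝ) (γ : (X t → ℝ) → U1 t) (u2 : U2 t) : ℝ :=
  ctilE S t π2 γ u2 + if T ≤ t then 0 else
    ∑ z : Y2 (t + 1) × U2 t,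
      lik S P t π2 γ u2 z * Jval S P T (t + 1) (ftilE S P t π2 γ u2 z)

theorem ctil_split (S : Sys X U1 U2 W V1 V2 Y1 Y2) (t : ℕ)
    (π2 : X t × Lp Y1 U1 t → ℝ) (hπ : ∀ sl, 0 ≤ π2 sl) (γ : (X t → ℝ) → U1 t) (u2 : U2 t) :
    ctilE S t π2 γ u2 = ∑ l : Lp Y1 U1 t, (∑ x, π2 (x, l)) *
      ∑ x, S.c t x (γ (eMap t π2 l)) u2 * eMap t π2 l x := by
  rw [ctilE, Fintype.sum_prod_type_right]
  refine Finset.sum_congr rfl fun l _ => ?_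
  rw [Finset.mul_sum]
  refine Finset.sum_congr rfl fun x _ => ?_
  by_cases h : ∑ x, π2 (x, l) = 0
  · rw [h, (Finset.sum_eq_zero_iff_of_nonneg (fun x _ => hπ (x, l))).1 h x (Finset.mem_univ _)]
    simp
  · simp only [eMap]
    field_simp

theorem Qv_congr (S : Sys X U1 U2 W V1 V2 Y1 Y2) (P : PrimPMF X W V1 V2) (T t : ℕ)
    (π2 : X t × Lp Y1 U1 t → ℝ) (γ γ' : (X t → ℝ) → U1 t) (u2 : U2 t)
    (h : ∀ l, γ (eMap t π2 l) = γ' (eMap t π2 l)) : Qv S P T t π2 γ u2 = Qv S P T t π2 γ' u2 := by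
  have hs : stepS S t π2 γ u2 = stepS S t π2 γ' u2 := by
    funext sl w v1 v2
    simp only [stepS, h]
  have hl : lik S P t π2 γ u2 = lik S P t π2 γ' u2 := by
    funext z
    simp only [lik, hs]
  have hf : ftilE S P t π2 γ u2 = ftilE S P t π2 γ' u2 := by
    funext z sl'
    simp only [ftilE, hs, hl]
  simp only [Qv, ctilE, h, hl, hf]

theorem Qv_finite (S : Sys X U1 U2 W V1 V2 Y1 Y2) (P : PrimPMF X W V1 V2) (T t : ℕ)
    (π2 : X t × Lp Y1 U1 t → ℝ) (u2 : U2 t) :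
    (Set.range fun γ : (X t → ℝ) → U1 t => Qv S P T t π2 γ u2).Finite := by
  refine (Set.finite_range (fun a : Lp Y1 U1 t → U1 t =>
    if h : ∃ γ : (X t → ℝ) → U1 t, ∀ l, γ (eMap t π2 l) = a l then
      Qv S P T t π2 h.choose u2 else 0)).subset ?_
  rintro _ ⟨γ, rfl⟩
  have h : ∃ γ' : (X t → ℝ) → U1 t, ∀ l, γ' (eMap t π2 l) = γ (eMap t π2 l) := ⟨γ, fun _ => rfl⟩
  refine ⟨fun l => γ (eMap t π2 l), ?_⟩
  simp only
  rw [dif_pos h]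
  exact Qv_congr S P T t π2 _ _ u2 h.choose_spec

theorem Jval_lt (S : Sys X U1 U2 W V1 V2 Y1 Y2) (P : PrimPMF X W V1 V2) (T t : ℕ) (ht : ¬ T ≤ t)
    (π2 : X t × Lp Y1 U1 t → ℝ) :
    Jval S P T t π2 = ⨅ u2 : U2 t, ⨅ γ : (X t → ℝ) → U1 t, Qv S P T t π2 γ u2 := by
  rw [Jval, dif_neg ht]
  simp only [Qv, if_neg ht]

theorem Jval_ge (S : Sys X U1 U2 W V1 V2 Y1 Y2) (P : PrimPMF X W V1 V2) (T t : ℕ) (ht : T ≤ t)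
    (π2 : X t × Lp Y1 U1 t → ℝ) :
    Jval S P T t π2 = ⨅ u2 : U2 t, ∑ l : Lp Y1 U1 t, (∑ x, π2 (x, l)) *
      ⨅ u1 : U1 t, ∑ x, S.c t x u1 u2 * eMap t π2 l x := by
  rw [Jval, dif_pos ht]

theorem Jval_le (S : Sys X U1 U2 W V1 V2 Y1 Y2) (P : PrimPMF X W V1 V2) (T t : ℕ)
    (π2 : X t × Lp Y1 U1 t → ℝ) (hπ : ∀ sl, 0 ≤ π2 sl) (γ : (X t → ℝ) → U1 t) (u2 : U2 t) :
    Jval S P T t π2 ≤ Qv S P T t π2 γ u2 := by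
  by_cases ht : T ≤ t
  · rw [Jval_ge S P T t ht, Qv, if_pos ht, add_zero, ctil_split S t π2 hπ]
    refine (ciInf_le (Set.finite_range _).bddBelow u2).trans ?_
    refine Finset.sum_le_sum fun l _ => ?_
    refine mul_le_mul_of_nonneg_left ?_ (Finset.sum_nonneg fun x _ => hπ _)
    exact ciInf_le (Set.finite_range _).bddBelow (γ (eMap t π2 l))
  · rw [Jval_lt S P T t ht]
    refine (ciInf_le (Set.finite_range _).bddBelow u2).trans ?_
    exact ciInf_le (Qv_finite S P T t π2 u2).bddBelow γ

theorem Jval_attain (S : Sys X U1 U2 W V1 V2 Y1 Y2) (P : PrimPMF X W V1 V2) (T t : ℕ)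
    [Nonempty (U1 t)] [Nonempty (U2 t)] (π2 : X t × Lp Y1 U1 t → ℝ) :
    ∃ (γ : (X t → ℝ) → U1 t) (u2 : U2 t), (∀ sl, 0 ≤ π2 sl) →
      Jval S P T t π2 = Qv S P T t π2 γ u2 := by
  by_cases ht : T ≤ t
  · obtain ⟨u2, hu⟩ := exists_eq_ciInf_of_finite (f := fun u2 : U2 t =>
      ∑ l : Lp Y1 U1 t, (∑ x, π2 (x, l)) * ⨅ u1 : U1 t, ∑ x, S.c t x u1 u2 * eMap t π2 l x)
    have : ∀ p : X t → ℝ, ∃ u1 : U1 t, ∑ x, S.c t x u1 u2 * p x =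
        ⨅ u1 : U1 t, ∑ x, S.c t x u1 u2 * p x := fun p => exists_eq_ciInf_of_finite
    choose γ hγ using this
    refine ⟨γ, u2, fun hπ => ?_⟩
    rw [Jval_ge S P T t ht, Qv, if_pos ht, add_zero, ctil_split S t π2 hπ, ← hu]
    simp only [hγ]
  · obtain ⟨u2, hu⟩ := exists_eq_ciInf_of_finite (f := fun u2 : U2 t =>
      ⨅ γ : (X t → ℝ) → U1 t, Qv S P T t π2 γ u2)
    obtain ⟨γ, hγ⟩ := (Set.range_nonempty (fun γ : (X t → ℝ) → U1 t => Qv S P T t π2 γ u2)).csInf_mem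
      (Qv_finite S P T t π2 u2)
    refine ⟨γ, u2, fun _ => ?_⟩
    rw [Jval_lt S P T t ht, ← hu]
    exact hγ.symm

theorem bellman (S : Sys X U1 U2 W V1 V2 Y1 Y2) (g : Strat U1 U2 Y1 Y2)
    (P : PrimPMF X W V1 V2) (T : ℕ) (t : ℕ) (G : M2 Y2 U2 t → (X t → ℝ) → U1 t)
    (hG : Gen S g P T t G) :
    (∑ ω : ΩT X W V1 V2 T, mass P T ω * (stageCost S g (toPrim T ω) t +
      if T ≤ t then 0 else Jval S P T (t + 1) (infoState2 S g P T ω (t + 1)))) =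
    ∑ ω : ΩT X W V1 V2 T, mass P T ω * Qv S P T t (infoState2 S g P T ω t)
      (G (m2Traj S g (toPrim T ω) t)) (u2Traj S g (toPrim T ω) t) := by
  refine tower S g P T t _ (fun m => Qv S P T t (is2 S g P T t m) (G m) (g.g2 t m)) ?_
  intro m hm
  have hc := cost_cond S g P T t G hG m hm
  simp only [Qv]
  by_cases ht : T ≤ t
  · simp only [if_pos ht, add_zero]
    exact hc
  · have hv := value_cond S g P T t G hG (by omega) m hm (Jval S P T (t + 1))
    simp only [if_neg ht]
    rw [mul_add, ← hc, ← hv, ← Finset.sum_add_distrib]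
    refine Finset.sum_congr rfl fun ω _ => ?_
    split_ifs <;> ring

theorem costToGo_split (S : Sys X U1 U2 W V1 V2 Y1 Y2) (g : Strat U1 U2 Y1 Y2)
    (P : PrimPMF X W V1 V2) (T : ℕ) (t : ℕ) (ht : t ≤ T) : costToGo S g P T t =
      (∑ ω : ΩT X W V1 V2 T, mass P T ω * stageCost S g (toPrim T ω) t) +
        costToGo S g P T (t + 1) := by
  simp only [costToGo]
  rw [← Finset.sum_add_distrib]
  refine Finset.sum_congr rfl fun ω _ => ?_
  rw [← mul_add]
  congr 1
  have : Finset.Icc t T = insert t (Finset.Icc (t + 1) T) := by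
    ext s
    simp only [Finset.mem_Icc, Finset.mem_insert]
    omega
  rw [this, Finset.sum_insert (by simp)]

theorem costToGo_bellman (S : Sys X U1 U2 W V1 V2 Y1 Y2) (g : Strat U1 U2 Y1 Y2)
    (P : PrimPMF X W V1 V2) (T : ℕ) (t : ℕ) (ht : t ≤ T)
    (G : M2 Y2 U2 t → (X t → ℝ) → U1 t) (hG : Gen S g P T t G) : costToGo S g P T t =
      (∑ ω : ΩT X W V1 V2 T, mass P T ω * Qv S P T t (infoState2 S g P T ω t)
        (G (m2Traj S g (toPrim T ω) t)) (u2Traj S g (toPrim T ω) t)) +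
      if T ≤ t then 0 else costToGo S g P T (t + 1) -
        ∑ ω : ΩT X W V1 V2 T, mass P T ω * Jval S P T (t + 1) (infoState2 S g P T ω (t + 1)) := by
  rw [← bellman S g P T t G hG, costToGo_split S g P T t ht]
  by_cases h : T ≤ t
  · have : costToGo S g P T (t + 1) = 0 := by
      simp [costToGo, Finset.Icc_eq_empty (show ¬ t + 1 ≤ T by omega)]
    simp only [if_pos h, add_zero, this]
  · simp only [if_neg h, mul_add, Finset.sum_add_distrib]
    ring

theorem lower_bound (S : Sys X U1 U2 W V1 V2 Y1 Y2) (g : Strat U1 U2 Y1 Y2)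
    (P : PrimPMF X W V1 V2) (T : ℕ) (G : ∀ s, M2 Y2 U2 s → (X s → ℝ) → U1 s) (n : ℕ) :
    ∀ t, t + n = T → (∀ s, t ≤ s → s ≤ T → Gen S g P T s (G s)) →
    ∑ ω : ΩT X W V1 V2 T, mass P T ω * Jval S P T t (infoState2 S g P T ω t)
      ≤ costToGo S g P T t := by
  induction n with
  | zero =>
    intro t ht hG
    rw [costToGo_bellman S g P T t (by omega) (G t) (hG t le_rfl (by omega)),
      if_pos (by omega), add_zero]
    exact Finset.sum_le_sum fun ω _ => mul_le_mul_of_nonneg_left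
      (Jval_le S P T t _ (is2_nonneg S g P T t _) _ _) (mass_nonneg P T ω)
  | succ n ih =>
    intro t ht hG
    have := ih (t + 1) (by omega) (fun s h1 h2 => hG s (by omega) h2)
    rw [costToGo_bellman S g P T t (by omega) (G t) (hG t le_rfl (by omega)), if_neg (by omega)]
    refine le_add_of_le_of_nonneg ?_ (sub_nonneg.2 this)
    exact Finset.sum_le_sum fun ω _ => mul_le_mul_of_nonneg_left
      (Jval_le S P T t _ (is2_nonneg S g P T t _) _ _) (mass_nonneg P T ω)

theorem equality (S : Sys X U1 U2 W V1 V2 Y1 Y2) (g : Strat U1 U2 Y1 Y2)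
    (P : PrimPMF X W V1 V2) (T : ℕ) (G : ∀ s, M2 Y2 U2 s → (X s → ℝ) → U1 s) (n : ℕ) :
    ∀ t, t + n = T → (∀ s, t ≤ s → s ≤ T → Gen S g P T s (G s)) →
    (∀ s, t ≤ s → s ≤ T → ∀ ω : ΩT X W V1 V2 T, 
      Jval S P T s (infoState2 S g P T ω s) = Qv S P T s (infoState2 S g P T ω s)
        (G s (m2Traj S g (toPrim T ω) s)) (u2Traj S g (toPrim T ω) s)) →
    costToGo S g P T t =
      ∑ ω : ΩT X W V1 V2 T, mass P T ω * Jval S P T t (infoState2 S g P T ω t) := by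
  induction n with
  | zero =>
    intro t ht hG hQ
    rw [costToGo_bellman S g P T t (by omega) (G t) (hG t le_rfl (by omega)),
      if_pos (by omega), add_zero]
    exact Finset.sum_congr rfl fun ω _ => by rw [hQ t le_rfl (by omega)]
  | succ n ih =>
    intro t ht hG hQ
    have := ih (t + 1) (by omega) (fun s h1 h2 => hG s (by omega) h2)
      (fun s h1 h2 => hQ s (by omega) h2)
    rw [costToGo_bellman S g P T t (by omega) (G t) (hG t le_rfl (by omega)), if_neg (by omega),
      this, sub_self, add_zero]
    exact Finset.sum_congr rfl fun ω _ => by rw [hQ t le_rfl (by omega)]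

theorem is_congr (S : Sys X U1 U2 W V1 V2 Y1 Y2) (g g' : Strat U1 U2 Y1 Y2)
    (P : PrimPMF X W V1 V2) (T t : ℕ)
    (hg : ∀ s, s < t → g.g1 s = g'.g1 s ∧ g.g2 s = g'.g2 s) :
    is2 S g P T t = is2 S g' P T t ∧ is1 S g P T t = is1 S g' P T t := by
  have h := traj_congr_strat S g g' t hg
  constructor
  · funext m sl
    simp only [is2, fun ρ => (h ρ).1, fun ρ => (h ρ).2.1, fun ρ => (h ρ).2.2]
  · funext m x
    simp only [is1, m1Traj, fun ρ => (h ρ).1, fun ρ => (h ρ).2.1, fun ρ => (h ρ).2.2]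

theorem build (S : Sys X U1 U2 W V1 V2 Y1 Y2) (g : Strat U1 U2 Y1 Y2)
    (P : PrimPMF X W V1 V2) (T t : ℕ)
    (ψ : ∀ s, (X s × Lp Y1 U1 s → ℝ) → (X s → ℝ) → U1 s)
    (u : ∀ s, (X s × Lp Y1 U1 s → ℝ) → U2 s) (n : ℕ) :
    ∃ g' : Strat U1 U2 Y1 Y2, (∀ s, s < t → g'.g1 s = g.g1 s ∧ g'.g2 s = g.g2 s) ∧
      ∀ s, t ≤ s → s < n →
        (∀ m, g'.g1 s m = ψ s (is2 S g' P T s m.2) (is1 S g' P T s m)) ∧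
        (∀ m, g'.g2 s m = u s (is2 S g' P T s m)) := by
  induction n with
  | zero => exact ⟨g, fun _ _ => ⟨rfl, rfl⟩, fun s _ h => absurd h (by omega)⟩
  | succ n ih =>
    obtain ⟨g', h1, h2⟩ := ih
    by_cases hn : t ≤ n
    · let g'' : Strat U1 U2 Y1 Y2 :=
        ⟨Function.update g'.g1 n (fun m => ψ n (is2 S g' P T n m.2) (is1 S g' P T n m)),
         Function.update g'.g2 n (fun m => u n (is2 S g' P T n m))⟩
      have hag : ∀ s, s ≠ n → g''.g1 s = g'.g1 s ∧ g''.g2 s = g'.g2 s := fun s hs =>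
        ⟨Function.update_of_ne hs _ _, Function.update_of_ne hs _ _⟩
      have hn1 : g''.g1 n = _ := Function.update_self n _ g'.g1
      have hn2 : g''.g2 n = _ := Function.update_self n _ g'.g2
      refine ⟨g'', fun s hs => ?_, fun s hs hs' => ?_⟩
      · rw [(hag s (by omega)).1, (hag s (by omega)).2]
        exact h1 s hs
      · obtain ⟨e1, e2⟩ := is_congr S g'' g' P T s (fun r hr => hag r (by omega))
        rw [e1, e2]
        by_cases hsn : s = n
        · subst hsn
          rw [hn1, hn2]
          exact ⟨fun _ => rfl, fun _ => rfl⟩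
        · rw [(hag s hsn).1, (hag s hsn).2]
          exact h2 s hs (by omega)
    · exact ⟨g', h1, fun s hs hs' => absurd hs (by omega)⟩

/-- Theorem 3 of the paper. For every `t < T`:
(1) for every admissible team strategy of the structural form
`U¹_ℓ = φ1 ℓ (Π¹_ℓ, Π²_ℓ)`, `U²_ℓ = φ2 ℓ (Π²_ℓ)`, the expected cost-to-go
satisfies `𝒥_t(g) ≥ E[J_t(Π²_t)]`; and (2) some strategy `g'` agreeing with `g`
before time `t`, whose laws from time `t` on are the argmin prescription/control
laws of the dynamic program (in particular of the structural form
`U¹_s = ψstar s (Π²_s)(Π¹_s)`, `U²_s = gstar2 s (Π²_s)`), achieves equality: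
`𝒥_t(g') = E[J_t(Π²_t)]`. -/
theorem DP_optimality
    (T : ℕ) (S : Sys X U1 U2 W V1 V2 Y1 Y2) (P : PrimPMF X W V1 V2) :
    ∀ t, t < T →
      ∀ (g : Strat U1 U2 Y1 Y2)
        (φ1 : ∀ s, (X s → ℝ) → (X s × Lp Y1 U1 s → ℝ) → U1 s)
        (φ2 : ∀ s, (X s × Lp Y1 U1 s → ℝ) → U2 s),
        (∀ s, s ≤ T → ∀ ω : ΩT X W V1 V2 T, 0 < mass P T ω →
          u1Traj S g (toPrim T ω) s =
            φ1 s (infoState1 S g P T ω s) (infoState2 S g P T ω s)) →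
        (∀ s, s ≤ T → ∀ ω : ΩT X W V1 V2 T, 0 < mass P T ω →
          u2Traj S g (toPrim T ω) s = φ2 s (infoState2 S g P T ω s)) →
        -- (1) lower bound on the expected cost-to-go
        (costToGo S g P T t ≥
          ∑ ω : ΩT X W V1 V2 T, mass P T ω * Jval S P T t (infoState2 S g P T ω t)) ∧
        -- (2) equality for the argmin laws from time `t` onward
        (∃ (g' : Strat U1 U2 Y1 Y2)
           (ψstar : ∀ s, (X s × Lp Y1 U1 s → ℝ) → (X s → ℝ) → U1 s)
           (gstar2 : ∀ s, (X s × Lp Y1 U1 s → ℝ) → U2 s),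
          (∀ s, s < t → g'.g1 s = g.g1 s ∧ g'.g2 s = g.g2 s) ∧
          (∀ s, t ≤ s → s ≤ T → ∀ ω : ΩT X W V1 V2 T, 0 < mass P T ω →
            u1Traj S g' (toPrim T ω) s =
              ψstar s (infoState2 S g' P T ω s) (infoState1 S g' P T ω s) ∧
            u2Traj S g' (toPrim T ω) s = gstar2 s (infoState2 S g' P T ω s)) ∧
          costToGo S g' P T t =
            ∑ ω : ΩT X W V1 V2 T, mass P T ω * Jval S P T t (infoState2 S g' P T ω t)) := by
  intro t ht g φ1 φ2 hφ1 hφ2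
  refine ⟨?_, ?_⟩
  · exact lower_bound S g P T (fun s m p => φ1 s p (is2 S g P T s m)) (T - t) t (by omega)
      (fun s _ hs ω hω => hφ1 s hs ω hω)
  · have n1 : ∀ s, Nonempty (U1 s) := fun s => ⟨φ1 s (fun _ => 0) (fun _ => 0)⟩
    have n2 : ∀ s, Nonempty (U2 s) := fun s => ⟨φ2 s (fun _ => 0)⟩
    choose ψ u hψ using fun s => Jval_attain S P T s
    obtain ⟨g', h1, h2⟩ := build S g P T t ψ u (T + 1)
    have hu2 : ∀ s, t ≤ s → s ≤ T → ∀ ω : ΩT X W V1 V2 T,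
        u2Traj S g' (toPrim T ω) s = u s (infoState2 S g' P T ω s) :=
      fun s hs hs' ω => (h2 s hs (by omega)).2 _
    have hu1 : ∀ s, t ≤ s → s ≤ T → ∀ ω : ΩT X W V1 V2 T,
        u1Traj S g' (toPrim T ω) s =
          ψ s (infoState2 S g' P T ω s) (infoState1 S g' P T ω s) :=
      fun s hs hs' ω => (h2 s hs (by omega)).1 _
    refine ⟨g', ψ, u, h1, fun s hs hs' ω _ => ⟨hu1 s hs hs' ω, hu2 s hs hs' ω⟩, ?_⟩
    refine equality S g' P T (fun s m => ψ s (is2 S g' P T s m)) (T - t) t (by omega)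
      (fun s hs hs' ω _ => hu1 s hs hs' ω) (fun s hs hs' ω => ?_)
    rw [hu2 s hs hs' ω]
    exact hψ s _ (is2_nonneg S g' P T s _)

end

end NestedTeam
end

section
/- Along every realization of positive probability, the conditional distribution of agent 2's new state given the past and the next new information satisfies the Bayes-filter formula: P^{(g,ψ^2)}(S_t^2 = s_t^2 | π_t^2, m_t^2, z_{t+1}^2, γ_{0:t}^{[2,1]}) = [ P^{(g,ψ^2)}(Z_{t+1}^2 = z_{t+1}^2 | s_t^2, π_t^2, m_t^2, γ_{0:t}^{[2,1]}) · π_t^2(s_t^2) ] / [ Σ_{s̃_t^2} P^{(g,ψ^2)}(Z_{t+1}^2 = z_{t+1}^2 | s̃_t^2, π_t^2, m_t^2, γ_{0:t}^{[2,1]}) · π_t^2(s̃_t^2) ], and moreover the observation likelihood is strategy-independent: P^{(g,ψ^2)}(Z_{t+1}^2 = z_{t+1}^2 | s_t^2, π_t^2, m_t^2, γ_{0:t}^{[2,1]}) = Σ_{w_t, v_{t+1}^1, v_{t+1}^2} 𝕀[ φ̂_t(s_t^2, π_t^2, γ_t^{[2,1]}, u_t^2, w_t, v_{t+1}^{1:2})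 = z_{t+1}^2 ] · P(W_t = w_t) · P(V_{t+1}^{1:2} = v_{t+1}^{1:2}). -/
/-!
Common framework: a two-agent sequential dynamic team with nested information
structure (Dave & Malikopoulos, "Structural results for decentralized
stochastic control with a nested information structure").

* `X t` : state space at time `t`; `U1 t`, `U2 t` : action spaces of agents 1 and 2;
* `W t` : disturbance; `V1 t`, `V2 t` : measurement noises; `Y1 t`, `Y2 t` : observations.
* Dynamics `X_{t+1} = f t X_t U¹_t U²_t W_t`, observations `Y^k_t = h^k t X_t V^k_t`.
* Memories `M²_t = (Y²_{0:t}, U²_{0:t-1})`, `L_t^{[1,2]} = (Y¹_{0:t}, U¹_{0:t-1})`,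
  `M¹_t = (L_t^{[1,2]}, M²_t)` (nested information).
* The primitive random variables are independent with given PMFs; the sample
  space for horizon `T` is `ΩT`, with the product mass function `mass`.
-/

open scoped Classical
open Finset

namespace NestedTeam

noncomputable section

variable {X U1 U2 W V1 V2 Y1 Y2 : ℕ → Type}

variable [Fintype (X 0)] [∀ t, Fintype (W t)] [∀ t, Fintype (V1 t)] [∀ t, Fintype (V2 t)]
variable [∀ t, Inhabited (W t)] [∀ t, Inhabited (V1 t)] [∀ t, Inhabited (V2 t)]

theorem aux_hist_congr {X U1 U2 W V1 V2 Y1 Y2 : ℕ → Type}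
    (S : Sys X U1 U2 W V1 V2 Y1 Y2) (g : Strat U1 U2 Y1 Y2)
    (ρ ρ' : Prim X W V1 V2) (t : ℕ) (h0 : ρ.x0 = ρ'.x0)
    (hw : ∀ s, s < t → ρ.w s = ρ'.w s) (h1 : ∀ s, s < t → ρ.v1 s = ρ'.v1 s)
    (h2 : ∀ s, s < t → ρ.v2 s = ρ'.v2 s) : hist S g ρ t = hist S g ρ' t := by
  induction t with
  | zero => simp only [hist, h0]
  | succ t ih =>
    have e := ih (fun s hs => hw s (by omega)) (fun s hs => h1 s (by omega))
      (fun s hs => h2 s (by omega))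
    have e1 : ∀ s : Fin (t + 1), ρ.v1 s = ρ'.v1 s := fun s => h1 s s.2
    have e2 : ∀ s : Fin (t + 1), ρ.v2 s = ρ'.v2 s := fun s => h2 s s.2
    simp only [hist, e, e1, e2, hw t (by omega)]

theorem aux_traj_congr {X U1 U2 W V1 V2 Y1 Y2 : ℕ → Type}
    (S : Sys X U1 U2 W V1 V2 Y1 Y2) (g : Strat U1 U2 Y1 Y2)
    (ρ ρ' : Prim X W V1 V2) (t : ℕ) (h0 : ρ.x0 = ρ'.x0)
    (hw : ∀ s, s < t → ρ.w s = ρ'.w s) (h1 : ∀ s, s < t + 1 → ρ.v1 s = ρ'.v1 s)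
    (h2 : ∀ s, s < t + 1 → ρ.v2 s = ρ'.v2 s) :
    xTraj S g ρ t = xTraj S g ρ' t ∧ lpTraj S g ρ t = lpTraj S g ρ' t ∧
      m2Traj S g ρ t = m2Traj S g ρ' t := by
  have e := aux_hist_congr S g ρ ρ' t h0 hw (fun s hs => h1 s (by omega))
    (fun s hs => h2 s (by omega))
  have e1 : ∀ s : Fin (t + 1), ρ.v1 s = ρ'.v1 s := fun s => h1 s s.2
  have e2 : ∀ s : Fin (t + 1), ρ.v2 s = ρ'.v2 s := fun s => h2 s s.2
  refine ⟨?_, ?_, ?_⟩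
  · simp only [xTraj, e]
  · simp only [lpTraj, e, e1]
  · simp only [m2Traj, e, e2]

/-- Resampling of three coordinates. -/
def auxUpd {X W V1 V2 : ℕ → Type} (T t : ℕ) (ht : t < T) (ω : ΩT X W V1 V2 T)
    (c : W t × V1 (t + 1) × V2 (t + 1)) : ΩT X W V1 V2 T :=
  (ω.1, Function.update ω.2.1 ⟨t, by omega⟩ c.1,
    Function.update ω.2.2.1 ⟨t + 1, by omega⟩ c.2.1,
    Function.update ω.2.2.2 ⟨t + 1, by omega⟩ c.2.2)

/-- The three coordinates. -/
def auxC {X W V1 V2 : ℕ → Type} (T t : ℕ) (ht : t < T) (ω : ΩT X W V1 V2 T) :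
    W t × V1 (t + 1) × V2 (t + 1) :=
  (ω.2.1 ⟨t, by omega⟩, ω.2.2.1 ⟨t + 1, by omega⟩, ω.2.2.2 ⟨t + 1, by omega⟩)

theorem aux_ext_update {α : ℕ → Type} [∀ t, Inhabited (α t)] (T : ℕ)
    (a : (t : Fin (T + 1)) → α t) (i : Fin (T + 1)) (x : α i) (s : ℕ) (hs : s ≠ i) :
    ext T (Function.update a i x) s = ext T a s := by
  unfold ext
  split_ifs with h
  · rw [Function.update_of_ne]
    intro h'
    apply hs
    rw [← h']
  · rfl

theorem aux_prod_update {ι : Type} [Fintype ι] [DecidableEq ι] {α : ι → Type} (q : ∀ i, α i → ℝ)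
    (a : ∀ i, α i) (i : ι) (x : α i) :
    (∏ j, q j (Function.update a i x j)) * q i (a i) = (∏ j, q j (a j)) * q i x := by
  rw [Fintype.prod_eq_mul_prod_compl i, Fintype.prod_eq_mul_prod_compl i (fun j => q j (a j))]
  have : ∏ j ∈ ({i} : Finset ι)ᶜ, q j (Function.update a i x j) =
      ∏ j ∈ ({i} : Finset ι)ᶜ, q j (a j) := by
    apply Finset.prod_congr rfl
    intro j hj
    rw [Function.update_of_ne (by simpa using hj)]
  rw [this, Function.update_self]
  ring

theorem aux_traj_upd {X U1 U2 W V1 V2 Y1 Y2 : ℕ → Type}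
    [∀ t, Inhabited (W t)] [∀ t, Inhabited (V1 t)] [∀ t, Inhabited (V2 t)]
    (S : Sys X U1 U2 W V1 V2 Y1 Y2) (g : Strat U1 U2 Y1 Y2)
    (T t : ℕ) (ht : t < T) (ω : ΩT X W V1 V2 T) (c : W t × V1 (t + 1) × V2 (t + 1)) :
    xTraj S g (toPrim T (auxUpd T t ht ω c)) t = xTraj S g (toPrim T ω) t ∧
    lpTraj S g (toPrim T (auxUpd T t ht ω c)) t = lpTraj S g (toPrim T ω) t ∧
    m2Traj S g (toPrim T (auxUpd T t ht ω c)) t = m2Traj S g (toPrim T ω) t := by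
  apply aux_traj_congr
  · rfl
  · intro s hs
    exact aux_ext_update T _ _ _ s (by simp; omega)
  · intro s hs
    exact aux_ext_update T _ _ _ s (by simp; omega)
  · intro s hs
    exact aux_ext_update T _ _ _ s (by simp; omega)

theorem aux_mass_upd {X W V1 V2 : ℕ → Type} [Fintype (X 0)] [∀ t, Fintype (W t)]
    [∀ t, Fintype (V1 t)] [∀ t, Fintype (V2 t)]
    (P : PrimPMF X W V1 V2) (T t : ℕ) (ht : t < T) (ω : ΩT X W V1 V2 T)
    (c : W t × V1 (t + 1) × V2 (t + 1)) :
    mass P T (auxUpd T t ht ω c) * (P.pW t (auxC T t ht ω).1 * P.pV1 (t + 1) (auxC T t ht ω).2.1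
      * P.pV2 (t + 1) (auxC T t ht ω).2.2) =
    mass P T ω * (P.pW t c.1 * P.pV1 (t + 1) c.2.1 * P.pV2 (t + 1) c.2.2) := by
  have a := aux_prod_update (fun i : Fin (T + 1) => P.pW i) ω.2.1 ⟨t, by omega⟩ c.1
  have b := aux_prod_update (fun i : Fin (T + 1) => P.pV1 i) ω.2.2.1 ⟨t + 1, by omega⟩ c.2.1
  have d := aux_prod_update (fun i : Fin (T + 1) => P.pV2 i) ω.2.2.2 ⟨t + 1, by omega⟩ c.2.2
  simp only [mass, auxUpd, auxC] at a b d ⊢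
  linear_combination (exp := 1) P.pX0 ω.1 * congrArg₂ (· * ·) (congrArg₂ (· * ·) a b) d

theorem aux_sum_resample {X W V1 V2 : ℕ → Type} [Fintype (X 0)] [∀ t, Fintype (W t)]
    [∀ t, Fintype (V1 t)] [∀ t, Fintype (V2 t)]
    (P : PrimPMF X W V1 V2) (T t : ℕ) (ht : t < T)
    (E : ΩT X W V1 V2 T → ℝ) (F : W t × V1 (t + 1) × V2 (t + 1) → ℝ)
    (hE : ∀ ω c, E (auxUpd T t ht ω c) = E ω) :
    ∑ ω, mass P T ω * (E ω * F (auxC T t ht ω)) =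
    (∑ ω, mass P T ω * E ω) *
      ∑ c : W t × V1 (t + 1) × V2 (t + 1),
        (P.pW t c.1 * P.pV1 (t + 1) c.2.1 * P.pV2 (t + 1) c.2.2) * F c := by
  have hone : ∑ c : W t × V1 (t + 1) × V2 (t + 1),
      (P.pW t c.1 * P.pV1 (t + 1) c.2.1 * P.pV2 (t + 1) c.2.2) = 1 := by
    simp only [Fintype.sum_prod_type, ← Finset.mul_sum, P.pV2_sum, P.pV1_sum, P.pW_sum, mul_one]
  rw [← mul_one (∑ ω, mass P T ω * (E ω * F (auxC T t ht ω))), ← hone,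
    Finset.sum_mul_sum, Finset.sum_mul_sum, ← Fintype.sum_prod_type', ← Fintype.sum_prod_type']
  refine Finset.sum_bij' (fun p _ => (auxUpd T t ht p.1 p.2, auxC T t ht p.1))
    (fun p _ => (auxUpd T t ht p.1 p.2, auxC T t ht p.1)) (by simp) (by simp) ?_ ?_ ?_
  · rintro ⟨ω, c⟩ -
    simp [auxUpd, auxC]
  · rintro ⟨ω, c⟩ -
    simp [auxUpd, auxC]
  · rintro ⟨ω, c⟩ -
    simp only [hE]
    linear_combination (-(E ω * F (auxC T t ht ω))) * aux_mass_upd P T t ht ω c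

theorem aux_condProb {Ω : Type*} [Fintype Ω] (m : Ω → ℝ) (A B : Ω → Prop)
    [d1 : ∀ ω, Decidable (A ω ∧ B ω)] [d2 : ∀ ω, Decidable (B ω)] :
    condProb m A B = (∑ ω, if A ω ∧ B ω then m ω else 0) / (∑ ω, if B ω then m ω else 0) := by
  unfold condProb
  congr!

theorem aux_bayes {Ω σ : Type} [Fintype Ω] [Fintype σ] (m : Ω → ℝ) (hm : ∀ ω, 0 ≤ m ω)
    (f : Ω → σ) (B Z : Ω → Prop) (ω0 : Ω) (h0 : 0 < m ω0) (hB : B ω0) (s : σ) :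
    condProb m (fun ω => f ω = s) (fun ω => B ω ∧ Z ω) =
      condProb m Z (fun ω => f ω = s ∧ B ω) * condProb m (fun ω => f ω = s) B /
      ∑ st, condProb m Z (fun ω => f ω = st ∧ B ω) * condProb m (fun ω => f ω = st) B := by
  have hBpos : 0 < ∑ ω, if B ω then m ω else 0 := by
    apply Finset.sum_pos' 
    · intro i _
      split_ifs
      exacts [hm i, le_rfl]
    · exact ⟨ω0, Finset.mem_univ _, by simpa [hB] using h0⟩
  have key : ∀ st, condProb m Z (fun ω => f ω = st ∧ B ω) * condProb m (fun ω => f ω = st) B =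
      (∑ ω, if f ω = st ∧ (B ω ∧ Z ω) then m ω else 0) / ∑ ω, if B ω then m ω else 0 := by
    intro st
    have e : (∑ ω, if Z ω ∧ f ω = st ∧ B ω then m ω else 0) =
        ∑ ω, if f ω = st ∧ (B ω ∧ Z ω) then m ω else 0 := by
      apply Finset.sum_congr rfl
      intro ω _
      have : (Z ω ∧ f ω = st ∧ B ω) ↔ (f ω = st ∧ (B ω ∧ Z ω)) := by tauto
      simp only [this]
    rw [aux_condProb, aux_condProb, e]
    by_cases hA : (∑ ω, if f ω = st ∧ B ω then m ω else 0) = 0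
    · have : (∑ ω, if f ω = st ∧ (B ω ∧ Z ω) then m ω else 0) = 0 := by
        apply le_antisymm
        · refine le_trans (Finset.sum_le_sum ?_) hA.le
          intro ω _
          by_cases h1 : f ω = st <;> by_cases h2 : B ω <;> by_cases h3 : Z ω <;>
            simp [h1, h2, h3, hm]
        · apply Finset.sum_nonneg
          intro ω _
          split_ifs
          exacts [hm ω, le_rfl]
      rw [this]
      simp
    · field_simp
  have tot : ∑ st, (∑ ω, if f ω = st ∧ (B ω ∧ Z ω) then m ω else 0) =
      ∑ ω, if B ω ∧ Z ω then m ω else 0 := by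
    rw [Finset.sum_comm]
    apply Finset.sum_congr rfl
    intro ω _
    by_cases h : B ω ∧ Z ω <;> simp [h]
  simp only [key]
  rw [← Finset.sum_div, tot, div_div_div_cancel_right₀ hBpos.ne', aux_condProb]

theorem aux_mass_nonneg {X W V1 V2 : ℕ → Type} [Fintype (X 0)] [∀ t, Fintype (W t)]
    [∀ t, Fintype (V1 t)] [∀ t, Fintype (V2 t)]
    (P : PrimPMF X W V1 V2) (T : ℕ) (ω : ΩT X W V1 V2 T) : 0 ≤ mass P T ω := by
  unfold mass
  have := P.pX0_nonneg ω.1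
  have h1 := Finset.prod_nonneg (s := univ) fun (t : Fin (T + 1)) _ => P.pW_nonneg t (ω.2.1 t)
  have h2 := Finset.prod_nonneg (s := univ) fun (t : Fin (T + 1)) _ => P.pV1_nonneg t (ω.2.2.1 t)
  have h3 := Finset.prod_nonneg (s := univ) fun (t : Fin (T + 1)) _ => P.pV2_nonneg t (ω.2.2.2 t)
  positivity

theorem aux_likelihood {X U1 U2 W V1 V2 Y1 Y2 : ℕ → Type}
    [Fintype (X 0)] [∀ t, Fintype (W t)] [∀ t, Fintype (V1 t)] [∀ t, Fintype (V2 t)]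
    [∀ t, Inhabited (W t)] [∀ t, Inhabited (V1 t)] [∀ t, Inhabited (V2 t)]
    (T : ℕ) (S : Sys X U1 U2 W V1 V2 Y1 Y2) (P : PrimPMF X W V1 V2)
    (g : Strat U1 U2 Y1 Y2) (t : ℕ) (ht : t < T) (m : M2 Y2 U2 t)
    (s : X t × Lp Y1 U1 t) (z : Y2 (t + 1) × U2 t)
    (Φ : W t → V1 (t + 1) → V2 (t + 1) → Y2 (t + 1) × U2 t)
    (hΦ : ∀ ω : ΩT X W V1 V2 T, 0 < mass P T ω →
      (xTraj S g (toPrim T ω) t, lpTraj S g (toPrim T ω) t) = s →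
      m2Traj S g (toPrim T ω) t = m →
      z2Traj S g (toPrim T ω) t = Φ ((toPrim T ω).w t)
          ((toPrim T ω).v1 (t + 1)) ((toPrim T ω).v2 (t + 1)))
    (hpos : 0 < (∑ ω' : ΩT X W V1 V2 T,
            if (xTraj S g (toPrim T ω') t, lpTraj S g (toPrim T ω') t) = s ∧
                m2Traj S g (toPrim T ω') t = m then
              mass P T ω' else 0)) :
    condProb (mass P T) (fun ω' => z2Traj S g (toPrim T ω') t = z)
            (fun ω' => (xTraj S g (toPrim T ω') t, lpTraj S g (toPrim T ω') t) = s ∧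
              m2Traj S g (toPrim T ω') t = m) =
          ∑ w : W t, ∑ v1 : V1 (t + 1), ∑ v2 : V2 (t + 1),
            if Φ w v1 v2 = z then
              P.pW t w * P.pV1 (t + 1) v1 * P.pV2 (t + 1) v2 else 0 := by
  have key := aux_sum_resample P T t ht
    (fun ω' => if (xTraj S g (toPrim T ω') t, lpTraj S g (toPrim T ω') t) = s ∧
                m2Traj S g (toPrim T ω') t = m then 1 else 0)
    (fun c => if Φ c.1 c.2.1 c.2.2 = z then 1 else 0)
    (by
      intro ω c
      obtain ⟨h1, h2, h3⟩ := aux_traj_upd S g T t ht ω c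
      simp only [h1, h2, h3])
  rw [aux_condProb, div_eq_iff hpos.ne', mul_comm]
  have e1 : (∑ w : W t, ∑ v1 : V1 (t + 1), ∑ v2 : V2 (t + 1),
            if Φ w v1 v2 = z then
              P.pW t w * P.pV1 (t + 1) v1 * P.pV2 (t + 1) v2 else 0) =
      ∑ c : W t × V1 (t + 1) × V2 (t + 1),
        (P.pW t c.1 * P.pV1 (t + 1) c.2.1 * P.pV2 (t + 1) c.2.2) *
          (if Φ c.1 c.2.1 c.2.2 = z then 1 else 0) := by
    simp only [Fintype.sum_prod_type, mul_ite, mul_one, mul_zero]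
  rw [e1]
  simp only [mul_ite, mul_one, mul_zero] at key ⊢
  rw [← key]
  apply Finset.sum_congr rfl
  intro ω _
  rcases (aux_mass_nonneg P T ω).eq_or_lt with h | h
  · simp [← h]
  · by_cases hA : (xTraj S g (toPrim T ω) t, lpTraj S g (toPrim T ω) t) = s ∧
                m2Traj S g (toPrim T ω) t = m
    · have hz := hΦ ω h hA.1 hA.2
      have a : (toPrim T ω).w t = (auxC T t ht ω).1 := by
        simp only [toPrim, ext, auxC]; rw [dif_pos]
      have b : (toPrim T ω).v1 (t + 1) = (auxC T t ht ω).2.1 := by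
        simp only [toPrim, ext, auxC]; rw [dif_pos]
      have c : (toPrim T ω).v2 (t + 1) = (auxC T t ht ω).2.2 := by
        simp only [toPrim, ext, auxC]; rw [dif_pos]
      rw [a, b, c] at hz
      simp only [hz, hA, and_true, if_true, true_and]
    · simp only [hA, and_false, if_false]
      split_ifs <;> rfl

/-- Appendix B, equations (34) and (37) of the paper. Along every
realization of positive probability, the conditional distribution of agent 2's new
state `S²_t = (X_t, L_t^{[1,2]})` given `(π²_t, m²_t, z²_{t+1}, γ_{0:t}^{[2,1]})`
satisfies the Bayes-filter formula, and the observation likelihood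
`P(Z²_{t+1} = z²_{t+1} | s²_t, π²_t, m²_t, γ_{0:t}^{[2,1]})` is strategy-independent:
it equals `Σ_{w,v¹,v²} 𝕀[φ̂_t(s²_t, π²_t, γ_t^{[2,1]}, u²_t, w, v¹, v²) = z²_{t+1}]
· P(W_t = w) · P(V¹_{t+1} = v¹) · P(V²_{t+1} = v²)`. -/
theorem bayes_filter_formula
    [∀ t, Fintype (X t)] [∀ t, Fintype (U1 t)] [∀ t, Fintype (U2 t)]
    [∀ t, Fintype (Y1 t)] [∀ t, Fintype (Y2 t)]
    (T : ℕ) (S : Sys X U1 U2 W V1 V2 Y1 Y2) (P : PrimPMF X W V1 V2)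
    (g : Strat U1 U2 Y1 Y2) (ψ : ∀ t, M2 Y2 U2 t → (X t → ℝ) → U1 t)
    (hcompat : Compat S g ψ P T)
    (φhat : ∀ t, (X t × Lp Y1 U1 t) → (X t × Lp Y1 U1 t → ℝ) → ((X t → ℝ) → U1 t) →
      U2 t → W t → V1 (t + 1) → V2 (t + 1) → Y2 (t + 1) × U2 t)
    (hφhat : ∀ t, t < T → ∀ ω : ΩT X W V1 V2 T, 0 < mass P T ω →
      z2Traj S g (toPrim T ω) t =
        φhat t (xTraj S g (toPrim T ω) t, lpTraj S g (toPrim T ω) t)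
          (infoState2 S g P T ω t) (ψ t (m2Traj S g (toPrim T ω) t))
          (u2Traj S g (toPrim T ω) t) ((toPrim T ω).w t)
          ((toPrim T ω).v1 (t + 1)) ((toPrim T ω).v2 (t + 1))) :
    ∀ t, t < T → ∀ ω : ΩT X W V1 V2 T, 0 < mass P T ω →
      ∀ s : X t × Lp Y1 U1 t,
        0 < (∑ ω' : ΩT X W V1 V2 T,
            if (xTraj S g (toPrim T ω') t, lpTraj S g (toPrim T ω') t) = s ∧
                m2Traj S g (toPrim T ω') t = m2Traj S g (toPrim T ω) t then
              mass P T ω' else 0) →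
        -- the Bayes-filter formula
        (condProb (mass P T)
            (fun ω' => (xTraj S g (toPrim T ω') t, lpTraj S g (toPrim T ω') t) = s)
            (fun ω' => m2Traj S g (toPrim T ω') t = m2Traj S g (toPrim T ω) t ∧
              z2Traj S g (toPrim T ω') t = z2Traj S g (toPrim T ω) t) =
          (condProb (mass P T)
              (fun ω' => z2Traj S g (toPrim T ω') t = z2Traj S g (toPrim T ω) t)
              (fun ω' => (xTraj S g (toPrim T ω') t, lpTraj S g (toPrim T ω') t) = s ∧
                m2Traj S g (toPrim T ω') t = m2Traj S g (toPrim T ω) t) *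
            infoState2 S g P T ω t s) /
          ∑ st : X t × Lp Y1 U1 t,
            condProb (mass P T)
                (fun ω' => z2Traj S g (toPrim T ω') t = z2Traj S g (toPrim T ω) t)
                (fun ω' => (xTraj S g (toPrim T ω') t, lpTraj S g (toPrim T ω') t) = st ∧
                  m2Traj S g (toPrim T ω') t = m2Traj S g (toPrim T ω) t) *
              infoState2 S g P T ω t st) ∧
        -- strategy-independence of the observation likelihood
        (condProb (mass P T)
            (fun ω' => z2Traj S g (toPrim T ω') t = z2Traj S g (toPrim T ω) t)
            (fun ω' => (xTraj S g (toPrim T ω') t, lpTraj S g (toPrim T ω') t) = s ∧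
              m2Traj S g (toPrim T ω') t = m2Traj S g (toPrim T ω) t) =
          ∑ w : W t, ∑ v1 : V1 (t + 1), ∑ v2 : V2 (t + 1),
            if φhat t s (infoState2 S g P T ω t) (ψ t (m2Traj S g (toPrim T ω) t))
                (u2Traj S g (toPrim T ω) t) w v1 v2 = z2Traj S g (toPrim T ω) t then
              P.pW t w * P.pV1 (t + 1) v1 * P.pV2 (t + 1) v2 else 0) := by
  rename_i i0 _ _ _ _ _ _ iX _ _ _ _
  have hinst : i0 = iX 0 := Subsingleton.elim _ _
  subst hinst
  intro t ht ω hω s hs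
  refine ⟨?_, ?_⟩
  · exact aux_bayes (mass P T) (aux_mass_nonneg P T)
      (fun ω' => (xTraj S g (toPrim T ω') t, lpTraj S g (toPrim T ω') t))
      (fun ω' => m2Traj S g (toPrim T ω') t = m2Traj S g (toPrim T ω) t)
      (fun ω' => z2Traj S g (toPrim T ω') t = z2Traj S g (toPrim T ω) t) ω hω rfl s
  · refine aux_likelihood T S P g t ht (m2Traj S g (toPrim T ω) t) s _
      (φhat t s (infoState2 S g P T ω t) (ψ t (m2Traj S g (toPrim T ω) t))
                (u2Traj S g (toPrim T ω) t)) ?_ hs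
    intro ω' hω' h1 h2
    have h := hφhat t ht ω' hω'
    have hi : infoState2 S g P T ω' t = infoState2 S g P T ω t := by
      unfold infoState2
      rw [h2]
    have hu : u2Traj S g (toPrim T ω') t = u2Traj S g (toPrim T ω) t := by
      unfold u2Traj
      rw [h2]
    rw [h1, h2, hi, hu] at h
    exact h


end

end NestedTeam
end
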